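/- arXiv:1804.11217 — 8 statements merged into one kernel-verified Lean document; each statement's English description precedes it below -/
import Mathlib

section
/- A graph G is a k-letter graph if and only if (1) there is a partition V₁, V₂, …, V_p of V(G) with p ≤ k such that each V_i is either a clique or an independent set in G, and (2) there is a linear ordering L of V(G) such that for each pair of distinct indices 1 ≤ i, j ≤ p, the set of ordered pairs (x,y) ∈ V_i × V_j with {x,y} ∈ E(G) is one of the following four sets: L ∩ (V_i × V_j), L⁻¹ ∩ (V_i × V_j), V_i × V_j, or ∅ (where L is regarded as a binary relation, i.e. a set of ordered pairs). -/
/-!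
Ordering the vertices along the word, a letter graph is one in which the adjacency of an earlier
vertex to a later one depends only on their letters; the dependence is the decoder. For `i ≠ j`,
the truth values of `(i, j) ∈ P` and `(j, i) ∈ P` correspond to the four admissible edge sets
between `Vᵢ` and `Vⱼ`, while `(i, i) ∈ P` decides between `Vᵢ` being a clique or independent.
-/

/-- The letter graph of a word `w` over an alphabet `α` with decoder `P`:
vertices are positions `1,…,n`, and `i` is adjacent to `j > i` iff `(wᵢ, wⱼ) ∈ P`. -/
def letterGraph {n : ℕ} {α : Type*} (P : α → α → Prop) (w : Fin n → α) :
    SimpleGraph (Fin n) where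
  Adj i j := (i < j ∧ P (w i) (w j)) ∨ (j < i ∧ P (w j) (w i))
  symm := by
    constructor
    intro i j h
    rcases h with h | h
    · exact Or.inr h
    · exact Or.inl h
  loopless := by
    constructor
    intro i h
    rcases h with h | h <;> exact lt_irrefl i h.1

/-- `G` is a `k`-letter graph: isomorphic to the letter graph of some word over an
alphabet of size at most `k` (wlog `Fin k`) with some decoder. -/
def IsKLetterGraph {V : Type} (G : SimpleGraph V) (k : ℕ) : Prop :=
  ∃ (n : ℕ) (P : Fin k → Fin k → Prop) (w : Fin n → Fin k),
    Nonempty (G ≃g letterGraph P w)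

/-- `P` decodes `G` from the vertex order `L` and the lettering `c`: an earlier vertex is adjacent
to a later one iff `P` relates their letters. It presents letter graphs without placing the
vertices in positions `1, …, n`. -/
def IsDecoder {V α : Type*} (G : SimpleGraph V) (L : V → V → Prop) (c : V → α)
    (P : α → α → Prop) : Prop :=
  ∀ ⦃x y⦄, L x y → (G.Adj x y ↔ P (c x) (c y))

/-- Between `s` and `t`, adjacency is given by the order `L`, by its reverse, or is complete or
empty. This is the condition on a pair of distinct parts in the characterization of `k`-letter
graphs, with the relations `⊤` and `⊥` standing for the edge sets `s × t` and `∅`. -/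
def IsHomogeneousBetween {V : Type*} (G : SimpleGraph V) (L : V → V → Prop) (s t : Set V) : Prop :=
  ∃ r ∈ ({L, flip L, ⊤, ⊥} : Set (V → V → Prop)), ∀ ⦃x⦄, x ∈ s → ∀ ⦃y⦄, y ∈ t → (G.Adj x y ↔ r x y)

section

variable {V W α β : Type*} {G : SimpleGraph V} {H : SimpleGraph W} {L : V → V → Prop} {c : V → α}
  {P : α → α → Prop}

theorem isHomogeneousBetween_iff_setOf_eq {s t : Set V} :
    IsHomogeneousBetween G L s t ↔
      {q : V × V | q.1 ∈ s ∧ q.2 ∈ t ∧ G.Adj q.1 q.2}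
        = {q : V × V | q.1 ∈ s ∧ q.2 ∈ t ∧ L q.1 q.2} ∨
      {q : V × V | q.1 ∈ s ∧ q.2 ∈ t ∧ G.Adj q.1 q.2}
        = {q : V × V | q.1 ∈ s ∧ q.2 ∈ t ∧ L q.2 q.1} ∨
      {q : V × V | q.1 ∈ s ∧ q.2 ∈ t ∧ G.Adj q.1 q.2} = {q : V × V | q.1 ∈ s ∧ q.2 ∈ t} ∨
      {q : V × V | q.1 ∈ s ∧ q.2 ∈ t ∧ G.Adj q.1 q.2} = ∅ := by
  simp [IsHomogeneousBetween, Set.ext_iff, flip, imp_forall_iff]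

theorem IsHomogeneousBetween.adj_iff_adj [Std.Asymm L] {s t : Set V}
    (h : IsHomogeneousBetween G L s t) {x x' y y' : V} (hx : x ∈ s) (hx' : x' ∈ s) (hy : y ∈ t)
    (hy' : y' ∈ t) (hxy : L x y) (hxy' : L x' y') : G.Adj x y ↔ G.Adj x' y' := by
  obtain ⟨r, hr, h⟩ := h
  have r_iff : r x y ↔ r x' y' := by
    rcases hr with rfl | rfl | rfl | rfl
    · exact iff_of_true hxy hxy'
    · exact iff_of_false (asymm_of L hxy) (asymm_of L hxy')
    · exact Iff.rfl
    · exact Iff.rfl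
  rw [h hx hy, h hx' hy', r_iff]

namespace IsDecoder

theorem comap (h : IsDecoder G L c P) (e : H ↪g G) :
    IsDecoder H (e ⁻¹'o L) (c ∘ e) P :=
  fun _ _ hxy => e.map_adj_iff.symm.trans (h hxy)

theorem map (h : IsDecoder G L c P) {g : α → β} (hg : g.Injective) :
    IsDecoder G L (g ∘ c) (Relation.Map P g g) :=
  fun _ _ hxy => (h hxy).trans (Relation.map_apply_apply hg hg P _ _).symm

theorem adj_iff [Std.Trichotomous L] (h : IsDecoder G L c P) {x y : V} (hxy : x ≠ y) :
    G.Adj x y ↔ (L x y ∧ P (c x) (c y)) ∨ (L y x ∧ P (c y) (c x)) := by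
  have hlt := @h x y
  have hgt := @h y x
  have htri := trichotomous_of L x y
  rw [G.adj_comm y x] at hgt
  tauto

theorem isClique_or_isIndepSet [Std.Trichotomous L] (h : IsDecoder G L c P) (i : α) :
    G.IsClique (c ⁻¹' {i}) ∨ G.IsIndepSet (c ⁻¹' {i}) := by
  by_cases hi : P i i
  · left
    rintro x rfl y hy hxy
    have := trichotomous_of L x y
    rw [h.adj_iff hxy, hy]
    tauto
  · right
    rintro x rfl y hy hxy
    rw [h.adj_iff hxy, hy]
    tauto

theorem isHomogeneousBetween [Std.Trichotomous L] (h : IsDecoder G L c P) {i j : α}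
    (hij : i ≠ j) : IsHomogeneousBetween G L (c ⁻¹' {i}) (c ⁻¹' {j}) := by
  have hne {x y : V} (hx : c x = i) (hy : c y = j) : x ≠ y := by
    rintro rfl
    exact hij (hx.symm.trans hy)
  have hadj {x y : V} (hx : c x = i) (hy : c y = j) :
      G.Adj x y ↔ (L x y ∧ P i j) ∨ (L y x ∧ P j i) := by
    rw [h.adj_iff (hne hx hy), hx, hy]
  have htotal {x y : V} (hx : c x = i) (hy : c y = j) : L x y ∨ L y x :=
    (trichotomous_of L x y).imp_right (Or.resolve_left · (hne hx hy))
  by_cases hP : P i j <;> by_cases hP' : P j i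
  · exact ⟨⊤, by simp, fun x hx y hy => by simpa [hadj hx hy, hP, hP'] using htotal hx hy⟩
  · exact ⟨L, by simp, fun x hx y hy => by simp [hadj hx hy, hP, hP']⟩
  · exact ⟨flip L, by simp, fun x hx y hy => by simp [hadj hx hy, hP, hP', flip]⟩
  · exact ⟨⊥, by simp, fun x hx y hy => by simp [hadj hx hy, hP, hP']⟩

end IsDecoder

theorem exists_isDecoder_of_adj_imp_adj
    (h : ∀ ⦃x y x' y'⦄, L x y → L x' y' → c x = c x' → c y = c y' → G.Adj x y → G.Adj x' y') :
    ∃ P, IsDecoder G L c P := by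
  refine ⟨Relation.Map (fun x y => L x y ∧ G.Adj x y) c c, fun x y hxy => ⟨fun hG => ?_, ?_⟩⟩
  · exact ⟨x, y, ⟨hxy, hG⟩, rfl, rfl⟩
  · rintro ⟨x', y', ⟨hxy', hG⟩, hx, hy⟩
    exact h hxy' hxy hx hy hG

theorem exists_isDecoder_iff [Std.Asymm L] [Std.Trichotomous L] :
    (∃ P, IsDecoder G L c P) ↔
      (∀ i, G.IsClique (c ⁻¹' {i}) ∨ G.IsIndepSet (c ⁻¹' {i})) ∧
        Pairwise fun i j => IsHomogeneousBetween G L (c ⁻¹' {i}) (c ⁻¹' {j}) := by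
  constructor
  · rintro ⟨P, hP⟩
    exact ⟨hP.isClique_or_isIndepSet, fun _ _ => hP.isHomogeneousBetween⟩
  rintro ⟨hclass, hbetween⟩
  refine exists_isDecoder_of_adj_imp_adj fun x y x' y' hxy hxy' hx hy hadj => ?_
  by_cases hc : c x = c y
  · rcases hclass (c x) with hclique | hindep
    · exact hclique hx.symm (hy.symm.trans hc.symm) (ne_of_irrefl hxy')
    · exact absurd hadj (hindep rfl hc.symm (ne_of_irrefl hxy))
  · exact ((hbetween hc).adj_iff_adj rfl hx.symm rfl hy.symm hxy hxy').1 hadj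

theorem isDecoder_lt_iff_eq_letterGraph {n : ℕ} {G : SimpleGraph (Fin n)} {w : Fin n → α} :
    IsDecoder G (· < ·) w P ↔ G = letterGraph P w := by
  constructor
  · intro h
    ext i j
    by_cases hij : i = j
    · simp [hij]
    · exact h.adj_iff hij
  · rintro rfl i j hij
    simp [letterGraph, hij, hij.not_gt]

end

theorem exists_relIso_fin_lt {V : Type*} [Finite V] (L : V → V → Prop) [IsStrictTotalOrder V L] :
    ∃ n : ℕ, Nonempty (((· < ·) : Fin n → Fin n → Prop) ≃r L) := by
  classical
  have := Fintype.ofFinite V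
  let := linearOrderOfSTO L
  exact ⟨Fintype.card V, ⟨(Fintype.orderIsoFinOfCardEq V rfl).toRelIsoLT⟩⟩

theorem isKLetterGraph_iff_exists_isDecoder {V : Type} [Finite V] {G : SimpleGraph V} {k : ℕ} :
    IsKLetterGraph G k ↔ ∃ c : V → Fin k, ∃ L : V → V → Prop, IsStrictTotalOrder V L ∧
      ∃ P, IsDecoder G L c P := by
  constructor
  · rintro ⟨n, P, w, ⟨e⟩⟩
    have hP : IsDecoder (letterGraph P w) (· < ·) w P := isDecoder_lt_iff_eq_letterGraph.2 rfl
    have hL := (RelEmbedding.preimage e.toEquiv.toEmbedding (· < ·)).isStrictTotalOrder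
    exact ⟨w ∘ e, e ⁻¹'o (· < ·), hL, P, hP.comap e.toEmbedding⟩
  · rintro ⟨c, L, hL, P, hP⟩
    obtain ⟨n, ⟨o⟩⟩ := exists_relIso_fin_lt L
    let e : G.comap o ≃g G := SimpleGraph.Iso.comap o.toEquiv G
    have hword : IsDecoder (G.comap o) (· < ·) (c ∘ o) P :=
      fun _ _ hij => hP.comap e.toEmbedding (o.map_rel_iff.2 hij)
    exact ⟨n, P, c ∘ o, ⟨isDecoder_lt_iff_eq_letterGraph.1 hword ▸ e.symm⟩⟩

/-- Petkovšek's characterization of `k`-letter graphs. -/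
theorem kLetterGraph_iff {V : Type} [Fintype V] (G : SimpleGraph V) (k : ℕ) :
    IsKLetterGraph G k ↔
      ∃ p : ℕ, p ≤ k ∧ ∃ f : V → Fin p,
        (∀ i : Fin p, G.IsClique (f ⁻¹' {i}) ∨
          (f ⁻¹' {i}).Pairwise fun x y => ¬ G.Adj x y) ∧
        ∃ L : V → V → Prop, IsStrictTotalOrder V L ∧
          ∀ i j : Fin p, i ≠ j →
            ({q : V × V | f q.1 = i ∧ f q.2 = j ∧ G.Adj q.1 q.2}
                = {q : V × V | f q.1 = i ∧ f q.2 = j ∧ L q.1 q.2} ∨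
             {q : V × V | f q.1 = i ∧ f q.2 = j ∧ G.Adj q.1 q.2}
                = {q : V × V | f q.1 = i ∧ f q.2 = j ∧ L q.2 q.1} ∨
             {q : V × V | f q.1 = i ∧ f q.2 = j ∧ G.Adj q.1 q.2}
                = {q : V × V | f q.1 = i ∧ f q.2 = j} ∨
             {q : V × V | f q.1 = i ∧ f q.2 = j ∧ G.Adj q.1 q.2} = ∅) := by
  rw [isKLetterGraph_iff_exists_isDecoder]
  constructor
  · rintro ⟨c, L, hL, hP⟩
    obtain ⟨hclass, hbetween⟩ := exists_isDecoder_iff.1 hP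
    exact ⟨k, le_rfl, c, hclass, L, hL, fun i j hij =>
      isHomogeneousBetween_iff_setOf_eq.1 (hbetween hij)⟩
  · rintro ⟨p, hp, f, hclass, L, hL, hbetween⟩
    obtain ⟨P, hP⟩ := exists_isDecoder_iff.2 ⟨hclass, fun i j hij =>
      isHomogeneousBetween_iff_setOf_eq.2 (hbetween i j hij)⟩
    exact ⟨Fin.castLE hp ∘ f, L, hL, _, hP.map (Fin.castLE_injective hp)⟩
end

section
/- Let G = (A ∪ B ∪ C, E) be a nice graph, i.e., its vertex set is partitioned into three independent sets A, B, C such that the induced bipartite subgraphs G[A ∪ B], G[B ∪ C] and G[C ∪ A] are 2K₂-free, and no three vertices a ∈ A, b ∈ B, c ∈ C induce a triangle K₃ or an anti-triangle (three pairwise non-adjacent vertices). Then A, B, and C admit linear orderings such that all three bipartite graphs G[A ∪ B], G[B ∪ C] and G[C ∪ A] are properly ordered: the ordering of A is decreasing with respect to neighbourhoods in B and increasing with respect to neighbourhoods in C, the ordering of B is increasing with respect to A and decreasing with respect to C, and the ordering of C is increasing with respect to B and decreasing with respect to A. -/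
/-- `s` is an independent set in `G`. -/
def IsIndepSetOn {V : Type} (G : SimpleGraph V) (s : Set V) : Prop :=
  s.Pairwise fun x y => ¬ G.Adj x y

/-- The graph `2K₂`: two disjoint edges. -/
def twoK2 : SimpleGraph (Fin 4) := SimpleGraph.fromEdgeSet {s(0,1), s(2,3)}

/-- `(A,B,C)` is a nice triple in `G`: `A`, `B`, `C` are pairwise disjoint independent
sets, the induced bipartite subgraphs `G[A ∪ B]`, `G[B ∪ C]`, `G[C ∪ A]` are `2K₂`-free,
and no `a ∈ A`, `b ∈ B`, `c ∈ C` induce a triangle or an anti-triangle. -/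
def NiceTriple {V : Type} (G : SimpleGraph V) (A B C : Set V) : Prop :=
  Disjoint A B ∧ Disjoint A C ∧ Disjoint B C ∧
  IsIndepSetOn G A ∧ IsIndepSetOn G B ∧ IsIndepSetOn G C ∧
  IsEmpty (twoK2 ↪g G.induce (A ∪ B)) ∧
  IsEmpty (twoK2 ↪g G.induce (B ∪ C)) ∧
  IsEmpty (twoK2 ↪g G.induce (C ∪ A)) ∧
  ∀ a ∈ A, ∀ b ∈ B, ∀ c ∈ C,
    ¬(G.Adj a b ∧ G.Adj b c ∧ G.Adj a c) ∧
    ¬(¬G.Adj a b ∧ ¬G.Adj b c ∧ ¬G.Adj a c)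

/-- `G` is nice: its vertex set is partitioned into a nice triple. -/
def IsNice {V : Type} (G : SimpleGraph V) : Prop :=
  ∃ A B C : Set V, A ∪ B ∪ C = Set.univ ∧ NiceTriple G A B C

/-!
The 2K₂-free graphs `G[A ∪ B]` and `G[C ∪ A]` make the neighbourhoods in `B`, and those in `C`, of
the vertices of `A` into chains. The two chains are opposite: if `b ∈ B` is adjacent to `y ∈ A` but
not to `x ∈ A`, then a vertex of `C` adjacent to `y` but not to `x` would form a triangle with `y`
and `b` or an anti-triangle with `x` and `b`. Hence "smaller in `B` and larger in `C`" is a total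
preorder on `A`, and breaking its ties arbitrarily orders `A`. The definition of a nice triple is
invariant under rotating `A`, `B`, `C`, so the same argument orders `B` and `C`.
-/

theorem exists_linearOrder_of_total_on {α β : Type*} [Preorder β] (f : α → β) (s : Set α)
    (htotal : ∀ x ∈ s, ∀ y ∈ s, f x ≤ f y ∨ f y ≤ f x) :
    ∃ l : LinearOrder α, ∀ x ∈ s, ∀ y ∈ s, l.le x y → f x ≤ f y := by
  have : IsStrictOrder α (f ⁻¹'o (· < ·)) :=
    { irrefl := fun x => lt_irrefl (f x), trans := fun _ _ _ => lt_trans }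
  let : PartialOrder α := partialOrderOfSO (f ⁻¹'o (· < ·))
  refine ⟨(inferInstance : LinearOrder (LinearExtension α)), fun x hx y hy hxy => ?_⟩
  by_contra hfxy
  have hlt : f y < f x := lt_of_le_not_ge ((htotal x hx y hy).resolve_left hfxy) hfxy
  have hyx : toLinearExtension y ≤ toLinearExtension x := toLinearExtension.monotone (Or.inr hlt)
  have heq : x = y := le_antisymm (α := LinearExtension α) hxy hyx
  exact hfxy (heq ▸ le_rfl)

theorem exists_injective_nat_le_imp_le {α : Type*} [Finite α] (l : LinearOrder α) :
    ∃ f : α → ℕ, Function.Injective f ∧ ∀ x y, f x ≤ f y → l.le x y := by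
  obtain ⟨f⟩ := nonempty_orderEmbedding_of_finite_infinite α ℕ
  exact ⟨f, f.injective, fun _ _ => f.le_iff_le.1⟩

section InducedTwoK2

variable {V : Type*} {G : SimpleGraph V}

theorem nonempty_twoK2_embedding {a b c d : V} (hab : G.Adj a b) (hcd : G.Adj c d)
    (hac : ¬G.Adj a c) (had : ¬G.Adj a d) (hbc : ¬G.Adj b c) (hbd : ¬G.Adj b d) :
    Nonempty (twoK2 ↪g G) := by
  have hne_ac : a ≠ c := by rintro rfl; exact hbc hab.symm
  have hne_ad : a ≠ d := by rintro rfl; exact hbd hab.symm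
  have hne_bc : b ≠ c := by rintro rfl; exact hac hab
  have hne_bd : b ≠ d := by rintro rfl; exact had hab
  refine ⟨⟨⟨![a, b, c, d], fun i j hij => ?_⟩, fun {i j} => ?_⟩⟩
  · fin_cases i <;> fin_cases j <;> simp_all [hab.ne, hab.ne', hcd.ne, hcd.ne', eq_comm]
  · change G.Adj (![a, b, c, d] i) (![a, b, c, d] j) ↔ _
    fin_cases i <;> fin_cases j <;> simp_all [twoK2, G.adj_comm]

theorem neighborSet_inter_subset_total {S T : Set V} (hS : G.IsIndepSet S) (hT : G.IsIndepSet T)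
    (hfree : IsEmpty (twoK2 ↪g G.induce (S ∪ T))) {x y : V} (hx : x ∈ S) (hy : y ∈ S) :
    G.neighborSet x ∩ T ⊆ G.neighborSet y ∩ T ∨ G.neighborSet y ∩ T ⊆ G.neighborSet x ∩ T := by
  by_contra! hnot
  obtain ⟨b, ⟨hxb, hb⟩, hyb⟩ := Set.not_subset.1 hnot.1
  obtain ⟨c, ⟨hyc, hc⟩, hxc⟩ := Set.not_subset.1 hnot.2
  have hyb' : ¬G.Adj y b := fun h => hyb ⟨h, hb⟩
  have hxc' : ¬G.Adj x c := fun h => hxc ⟨h, hc⟩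
  refine not_isEmpty_iff.2 (nonempty_twoK2_embedding (G := G.induce (S ∪ T))
    (a := ⟨x, .inl hx⟩) (b := ⟨b, .inr hb⟩) (c := ⟨y, .inl hy⟩) (d := ⟨c, .inr hc⟩)
    hxb hyc ?_ hxc' (fun h => hyb' h.symm) ?_) hfree
  · exact fun h : G.Adj x y => hS hx hy h.ne h
  · exact fun h : G.Adj b c => hT hb hc h.ne h

end InducedTwoK2

/-- The neighbourhoods of `x` in `T` and in `U`, with reverse inclusion on the first component, so
that a function is monotone into this order iff it is decreasing with respect to `T` and increasing
with respect to `U`. -/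
def neighborProfile {V : Type*} (G : SimpleGraph V) (T U : Set V) (x : V) : (Set V)ᵒᵈ × Set V :=
  (OrderDual.toDual (G.neighborSet x ∩ T), G.neighborSet x ∩ U)

theorem neighborProfile_le_iff {V : Type*} {G : SimpleGraph V} {T U : Set V} {x y : V} :
    neighborProfile G T U x ≤ neighborProfile G T U y ↔
      G.neighborSet y ∩ T ⊆ G.neighborSet x ∩ T ∧ G.neighborSet x ∩ U ⊆ G.neighborSet y ∩ U :=
  Iff.rfl

namespace NiceTriple

variable {V : Type} {G : SimpleGraph V} {A B C : Set V}

theorem rotate (h : NiceTriple G A B C) : NiceTriple G B C A := by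
  obtain ⟨dAB, dAC, dBC, iA, iB, iC, fAB, fBC, fCA, htri⟩ := h
  refine ⟨dBC, dAB.symm, dAC.symm, iB, iC, iA, fBC, fCA, fAB, fun b hb c hc a ha => ?_⟩
  have := htri a ha b hb c hc
  rw [G.adj_comm c a, G.adj_comm b a]
  tauto

theorem neighborSet_inter_subset_of_adj_of_not_adj (h : NiceTriple G A B C) {x y b : V}
    (hx : x ∈ A) (hy : y ∈ A) (hb : b ∈ B) (hyb : G.Adj y b) (hxb : ¬G.Adj x b) :
    G.neighborSet y ∩ C ⊆ G.neighborSet x ∩ C := by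
  obtain ⟨-, -, -, -, -, -, -, -, -, htri⟩ := h
  rintro c ⟨hyc, hc⟩
  have hbc : ¬G.Adj b c := fun hbc => (htri y hy b hb c hc).1 ⟨hyb, hbc, hyc⟩
  have hxc : G.Adj x c := by_contra fun hxc => (htri x hx b hb c hc).2 ⟨hxb, hbc, hxc⟩
  exact ⟨hxc, hc⟩

theorem neighborProfile_le_of_not_subset (h : NiceTriple G A B C) {x y : V}
    (hx : x ∈ A) (hy : y ∈ A) (hnot : ¬G.neighborSet y ∩ B ⊆ G.neighborSet x ∩ B) :
    neighborProfile G B C y ≤ neighborProfile G B C x := by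
  obtain ⟨b, ⟨hyb, hb⟩, hxb⟩ := Set.not_subset.1 hnot
  have hC := h.neighborSet_inter_subset_of_adj_of_not_adj hx hy hb hyb fun hadj => hxb ⟨hadj, hb⟩
  obtain ⟨-, -, -, iA, iB, -, fAB, -⟩ := h
  exact neighborProfile_le_iff.2
    ⟨(neighborSet_inter_subset_total iA iB fAB hx hy).resolve_right hnot, hC⟩

theorem neighborProfile_total (h : NiceTriple G A B C) {x y : V} (hx : x ∈ A) (hy : y ∈ A) :
    neighborProfile G B C x ≤ neighborProfile G B C y ∨
      neighborProfile G B C y ≤ neighborProfile G B C x := by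
  by_cases hyx : G.neighborSet y ∩ B ⊆ G.neighborSet x ∩ B
  · by_cases hxy : G.neighborSet x ∩ B ⊆ G.neighborSet y ∩ B
    · obtain ⟨-, -, -, iA, -, iC, -, -, fCA, -⟩ := h
      exact (neighborSet_inter_subset_total iA iC (Set.union_comm C A ▸ fCA) hx hy).imp
        (fun hC => neighborProfile_le_iff.2 ⟨hyx, hC⟩)
        (fun hC => neighborProfile_le_iff.2 ⟨hxy, hC⟩)
    · exact .inl (h.neighborProfile_le_of_not_subset hy hx hxy)
  · exact .inr (h.neighborProfile_le_of_not_subset hx hy hyx)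

theorem exists_linearOrder (h : NiceTriple G A B C) :
    ∃ l : LinearOrder V, ∀ x ∈ A, ∀ y ∈ A, l.le x y →
      G.neighborSet y ∩ B ⊆ G.neighborSet x ∩ B ∧
      G.neighborSet x ∩ C ⊆ G.neighborSet y ∩ C :=
  exists_linearOrder_of_total_on (neighborProfile G B C) A
    fun _ hx _ hy => h.neighborProfile_total hx hy

end NiceTriple

theorem nice_admits_proper_orderings_general {V : Type} {G : SimpleGraph V} {A B C : Set V}
    (hnice : NiceTriple G A B C) :
    ∃ lA lB lC : LinearOrder V,
      (∀ x ∈ A, ∀ y ∈ A, lA.le x y →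
        G.neighborSet y ∩ B ⊆ G.neighborSet x ∩ B ∧
        G.neighborSet x ∩ C ⊆ G.neighborSet y ∩ C) ∧
      (∀ x ∈ B, ∀ y ∈ B, lB.le x y →
        G.neighborSet x ∩ A ⊆ G.neighborSet y ∩ A ∧
        G.neighborSet y ∩ C ⊆ G.neighborSet x ∩ C) ∧
      (∀ x ∈ C, ∀ y ∈ C, lC.le x y →
        G.neighborSet x ∩ B ⊆ G.neighborSet y ∩ B ∧
        G.neighborSet y ∩ A ⊆ G.neighborSet x ∩ A) := by
  obtain ⟨lA, hA⟩ := hnice.exists_linearOrder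
  obtain ⟨lB, hB⟩ := hnice.rotate.exists_linearOrder
  obtain ⟨lC, hC⟩ := hnice.rotate.rotate.exists_linearOrder
  exact ⟨lA, lB, lC, hA, fun x hx y hy hxy => (hB x hx y hy hxy).symm,
    fun x hx y hy hxy => (hC x hx y hy hxy).symm⟩

/-- In a nice graph, the three parts admit linear orderings (given by position
functions injective on each part) making all three bipartite graphs properly ordered:
`A` is decreasing w.r.t. `B` and increasing w.r.t. `C`, `B` is increasing w.r.t. `A`
and decreasing w.r.t. `C`, and `C` is increasing w.r.t. `B` and decreasing w.r.t. `A`. -/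
theorem nice_admits_proper_orderings {V : Type} [Fintype V] (G : SimpleGraph V)
    (A B C : Set V) (hpart : A ∪ B ∪ C = Set.univ) (hnice : NiceTriple G A B C) :
    ∃ fA fB fC : V → ℕ,
      Set.InjOn fA A ∧ Set.InjOn fB B ∧ Set.InjOn fC C ∧
      (∀ x ∈ A, ∀ y ∈ A, fA x ≤ fA y →
        G.neighborSet y ∩ B ⊆ G.neighborSet x ∩ B ∧
        G.neighborSet x ∩ C ⊆ G.neighborSet y ∩ C) ∧
      (∀ x ∈ B, ∀ y ∈ B, fB x ≤ fB y →
        G.neighborSet x ∩ A ⊆ G.neighborSet y ∩ A ∧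
        G.neighborSet y ∩ C ⊆ G.neighborSet x ∩ C) ∧
      (∀ x ∈ C, ∀ y ∈ C, fC x ≤ fC y →
        G.neighborSet x ∩ B ⊆ G.neighborSet y ∩ B ∧
        G.neighborSet y ∩ A ⊆ G.neighborSet x ∩ A) := by
  obtain ⟨lA, lB, lC, hA, hB, hC⟩ := nice_admits_proper_orderings_general hnice
  obtain ⟨fA, injA, leA⟩ := exists_injective_nat_le_imp_le lA
  obtain ⟨fB, injB, leB⟩ := exists_injective_nat_le_imp_le lB
  obtain ⟨fC, injC, leC⟩ := exists_injective_nat_le_imp_le lC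
  exact ⟨fA, fB, fC, injA.injOn, injB.injOn, injC.injOn,
    fun x hx y hy hxy => hA x hx y hy (leA x y hxy),
    fun x hx y hy hxy => hB x hx y hy (leB x y hxy),
    fun x hx y hy hxy => hC x hx y hy (leC x y hxy)⟩
end

section
/- A graph G is a 3-letter graph with the decoder {(a,b),(b,c),(c,a)} over the alphabet {a,b,c} if and only if G is nice, i.e., its vertex set can be partitioned into three independent sets A, B, C such that the induced bipartite subgraphs G[A ∪ B], G[B ∪ C] and G[C ∪ A] are 2K₂-free, and no three vertices a ∈ A, b ∈ B, c ∈ C induce a triangle K₃ or an anti-triangle (three pairwise non-adjacent vertices). -/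
/-- The cyclic decoder `{(a,b),(b,c),(c,a)}` over the alphabet `{a,b,c} = Fin 3`
(`a = 0`, `b = 1`, `c = 2`). -/
def cyclicDecoder : Fin 3 → Fin 3 → Prop := fun x y =>
  (x = 0 ∧ y = 1) ∨ (x = 1 ∧ y = 2) ∨ (x = 2 ∧ y = 0)

/-- `G` is a 3-letter graph with the decoder `{(a,b),(b,c),(c,a)}`. -/
def IsCyclic3Letter {V : Type} (G : SimpleGraph V) : Prop :=
  ∃ (n : ℕ) (w : Fin n → Fin 3), Nonempty (G ≃g letterGraph cyclicDecoder w)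

/-!
Color the vertices by the letters `0, 1, 2`. For `u` and `v` of different colors, adjacency decides
which of the two letters comes first in any word representing `G` with the cyclic decoder, so a
coloring comes from a word exactly when the resulting multipartite tournament is acyclic.
A rainbow triangle or anti-triangle is the same as a directed 3-cycle of this tournament, and an
induced `2K₂` between two color classes is the same as a directed 4-cycle alternating between two
colors. Finally, in a multipartite tournament without such short cycles every directed path can be
shortcut to one of length at most two, and so there is no directed cycle at all.
-/

section Numbering

variable {V : Type*}

theorem irrefl_transGen_iff_exists_numbering [Finite V] {R : V → V → Prop} :
    Std.Irrefl (Relation.TransGen R) ↔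
      ∃ (n : ℕ) (e : V ≃ Fin n), ∀ u v, R u v → e u < e v := by
  constructor
  · intro hR
    have : IsStrictOrder V (Relation.TransGen R) := {}
    let : PartialOrder V := partialOrderOfSO (Relation.TransGen R)
    let : Fintype (LinearExtension V) := Fintype.ofFinite V
    let e := (Fintype.orderIsoFinOfCardEq (LinearExtension V) rfl).symm
    refine ⟨_, e.toEquiv, fun u v huv => e.strictMono ?_⟩
    have hlt : u < v := Relation.TransGen.single huv
    exact (toLinearExtension.monotone.strictMono_of_injective fun _ _ => id) hlt
  · rintro ⟨n, e, he⟩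
    refine ⟨fun u hu => lt_irrefl (e u) ?_⟩
    simpa only [Relation.transGen_eq_self] using hu.lift e he

end Numbering

section MultipartiteTournament

variable {V κ : Type*}

/-- `R` is a multipartite tournament with parts the fibres of `c`: an orientation of the complete
multipartite graph on these parts. -/
structure IsMultipartiteTournament (c : V → κ) (R : V → V → Prop) : Prop where
  ne_of_rel : ∀ {u v}, R u v → c u ≠ c v
  asymm : ∀ {u v}, R u v → ¬R v u
  total : ∀ {u v}, c u ≠ c v → R u v ∨ R v u

/-- `R` has neither a directed 3-cycle nor a directed 4-cycle alternating between two colors of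
`c`. For a multipartite tournament this already excludes all directed cycles. -/
structure HasNoShortCycle (c : V → κ) (R : V → V → Prop) : Prop where
  no_three_cycle : ∀ {u v w}, R u v → R v w → ¬R w u
  no_four_cycle : ∀ {a b a' b'}, c a = c a' → c b = c b' → R a b → R b a' → R a' b' → ¬R b' a

namespace IsMultipartiteTournament

variable {c : V → κ} {R : V → V → Prop}

theorem rel_of_not_rel (hR : IsMultipartiteTournament c R) {u v : V} (hne : c u ≠ c v)
    (hvu : ¬R v u) : R u v :=
  (hR.total hne).resolve_right hvu

theorem exists_shortcut (hR : IsMultipartiteTournament c R) (hc : HasNoShortCycle c R)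
    {u x y v : V} (hux : R u x) (hxy : R x y) (hyv : R y v) :
    R u v ∨ ∃ w, R u w ∧ R w v := by
  by_cases huy : c u = c y
  · by_cases hxv : c x = c v
    · have huv : c u ≠ c v := hxv ▸ hR.ne_of_rel hux
      exact .inl (hR.rel_of_not_rel huv (hc.no_four_cycle huy hxv hux hxy hyv))
    · exact .inr ⟨x, hux, hR.rel_of_not_rel hxv (hc.no_three_cycle hxy hyv)⟩
  · exact .inr ⟨y, hR.rel_of_not_rel huy (hc.no_three_cycle hux hxy), hyv⟩

theorem transGen_iff_rel_or_exists (hR : IsMultipartiteTournament c R)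
    (hc : HasNoShortCycle c R) {u v : V} :
    Relation.TransGen R u v ↔ R u v ∨ ∃ w, R u w ∧ R w v := by
  constructor
  · intro h
    induction h with
    | single huv => exact .inl huv
    | tail _ hvx ih =>
      rcases ih with huv | ⟨w, huw, hwv⟩
      · exact .inr ⟨_, huv, hvx⟩
      · exact hR.exists_shortcut hc huw hwv hvx
  · rintro (huv | ⟨w, huw, hwv⟩)
    · exact .single huv
    · exact .tail (.single huw) hwv

theorem irrefl_transGen_iff_hasNoShortCycle (hR : IsMultipartiteTournament c R) :
    Std.Irrefl (Relation.TransGen R) ↔ HasNoShortCycle c R := by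
  constructor
  · intro hirr
    exact
      { no_three_cycle := fun {u _ _} huv hvw hwu =>
          hirr.irrefl u (((Relation.TransGen.single huv).tail hvw).tail hwu)
        no_four_cycle := fun {a _ _ _} _ _ hab hba' hab' hb'a =>
          hirr.irrefl a ((((Relation.TransGen.single hab).tail hba').tail hab').tail hb'a) }
  · intro hc
    refine ⟨fun u hu => ?_⟩
    rcases (hR.transGen_iff_rel_or_exists hc).1 hu with huu | ⟨w, huw, hwu⟩
    · exact hR.asymm huu huu
    · exact hR.asymm huw hwu

end IsMultipartiteTournament

end MultipartiteTournament

section TwoK2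

variable {W : Type*}

theorem twoK2_adj_iff {i j : Fin 4} : twoK2.Adj i j ↔
    (i = 0 ∧ j = 1) ∨ (i = 1 ∧ j = 0) ∨ (i = 2 ∧ j = 3) ∨ (i = 3 ∧ j = 2) := by
  simp only [twoK2, SimpleGraph.fromEdgeSet_adj, Set.mem_insert_iff, Set.mem_singleton_iff,
    Sym2.eq_iff]
  decide +revert

theorem nonempty_twoK2_embedding_iff {H : SimpleGraph W} :
    Nonempty (twoK2 ↪g H) ↔ ∃ x y z t, H.Adj x y ∧ H.Adj z t ∧
      ¬H.Adj x z ∧ ¬H.Adj x t ∧ ¬H.Adj y z ∧ ¬H.Adj y t := by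
  constructor
  · rintro ⟨f⟩
    refine ⟨f 0, f 1, f 2, f 3, ?_⟩
    simp only [f.map_adj_iff, twoK2_adj_iff]
    decide
  · rintro ⟨x, y, z, t, hxy, hzt, hxz, hxt, hyz, hyt⟩
    have hadj : ∀ i j, H.Adj (![x, y, z, t] i) (![x, y, z, t] j) ↔ twoK2.Adj i j := by
      intro i j
      rw [twoK2_adj_iff]
      fin_cases i <;> fin_cases j <;>
        simp [hxy, hzt, hxz, hxt, hyz, hyt, H.adj_comm y x, H.adj_comm t, H.adj_comm z x,
          H.adj_comm z y]
    refine ⟨⟨⟨![x, y, z, t], fun i j hij => ?_⟩, hadj _ _⟩⟩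
    have hnbr : ∀ k, twoK2.Adj i k ↔ twoK2.Adj j k := fun k => by rw [← hadj, ← hadj, hij]
    simp only [twoK2_adj_iff] at hnbr
    clear hij
    decide +revert

theorem mem_and_mem_of_adj_of_mem_union {G : SimpleGraph W} {A B : Set W}
    (hA : G.IsIndepSet A) (hB : G.IsIndepSet B) {x y : W} (hx : x ∈ A ∪ B) (hy : y ∈ A ∪ B)
    (hxy : G.Adj x y) : (x ∈ A ∧ y ∈ B) ∨ (y ∈ A ∧ x ∈ B) := by
  rcases hx with hx | hx <;> rcases hy with hy | hy
  · exact (hA hx hy hxy.ne hxy).elim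
  · exact .inl ⟨hx, hy⟩
  · exact .inr ⟨hy, hx⟩
  · exact (hB hx hy hxy.ne hxy).elim

theorem isEmpty_twoK2_embedding_induce_union_iff {G : SimpleGraph W} {A B : Set W}
    (hA : G.IsIndepSet A) (hB : G.IsIndepSet B) :
    IsEmpty (twoK2 ↪g G.induce (A ∪ B)) ↔
      ∀ a ∈ A, ∀ b ∈ B, ∀ a' ∈ A, ∀ b' ∈ B,
        G.Adj a b → ¬G.Adj b a' → G.Adj a' b' → G.Adj b' a := by
  rw [← not_nonempty_iff, nonempty_twoK2_embedding_iff]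
  constructor
  · intro h a ha b hb a' ha' b' hb' hab hba' hab'
    by_contra hb'a
    have haa' : ¬G.Adj a a' := fun h => hA ha ha' h.ne h
    have hbb' : ¬G.Adj b b' := fun h => hB hb hb' h.ne h
    exact h ⟨⟨a, .inl ha⟩, ⟨b, .inr hb⟩, ⟨a', .inl ha'⟩, ⟨b', .inr hb'⟩, hab, hab', haa',
      fun h => hb'a h.symm, hba', hbb'⟩
  · rintro h ⟨⟨x, hx⟩, ⟨y, hy⟩, ⟨z, hz⟩, ⟨t, ht⟩, hxy, hzt, hxz, hxt, hyz, hyt⟩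
    simp only [SimpleGraph.induce_adj] at hxy hzt hxz hxt hyz hyt
    rcases mem_and_mem_of_adj_of_mem_union hA hB hx hy hxy with ⟨hx, hy⟩ | ⟨hy, hx⟩ <;>
      rcases mem_and_mem_of_adj_of_mem_union hA hB hz ht hzt with ⟨hz, ht⟩ | ⟨ht, hz⟩
    · exact hxt (h x hx y hy z hz t ht hxy hyz hzt).symm
    · exact hxz (h x hx y hy t ht z hz hxy hyt hzt.symm).symm
    · exact hyt (h y hy x hx z hz t ht hxy.symm hxz hzt).symm
    · exact hyz (h y hy x hx t ht z hz hxy.symm hxt hzt.symm).symm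

end TwoK2

theorem exists_coloring_colorClass_eq {V ι : Type*} {G : SimpleGraph V} {S : ι → Set V}
    (hcover : ∀ v, ∃ i, v ∈ S i) (hdisj : Pairwise (Function.onFun Disjoint S))
    (hindep : ∀ i, G.IsIndepSet (S i)) :
    ∃ c : G.Coloring ι, ∀ i, c.colorClass i = S i := by
  choose c hc using hcover
  have c_eq_iff : ∀ {v i}, c v = i ↔ v ∈ S i := fun {v i} =>
    ⟨fun h => h ▸ hc v, fun hv => hdisj.eq (Set.not_disjoint_iff.2 ⟨v, hc v, hv⟩)⟩
  refine ⟨.mk c fun {u v} huv huv' => ?_, fun i => Set.ext fun v => c_eq_iff⟩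
  exact hindep (c v) (c_eq_iff.1 huv') (hc v) huv.ne huv

section Fin3

theorem fin_three_ne_iff {x y : Fin 3} : x ≠ y ↔ y = x + 1 ∨ x = y + 1 := by
  decide +revert

theorem fin_three_ne_add_one_of_eq_add_one {x y : Fin 3} (h : y = x + 1) : x ≠ y + 1 := by
  decide +revert

theorem fin_three_add_one_cycle {x y z : Fin 3} (hxy : y = x + 1)
    (hyz : z = y + 1) : x = z + 1 := by
  decide +revert

theorem fin_three_permutation {x y z : Fin 3} (hxy : x ≠ y) (hyz : y ≠ z) (hzx : z ≠ x) :
    (x = 0 ∧ y = 1 ∧ z = 2) ∨ (x = 1 ∧ y = 2 ∧ z = 0) ∨ (x = 2 ∧ y = 0 ∧ z = 1) ∨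
      (x = 0 ∧ y = 2 ∧ z = 1) ∨ (x = 1 ∧ y = 0 ∧ z = 2) ∨ (x = 2 ∧ y = 1 ∧ z = 0) := by
  lia

end Fin3

section MustPrecede

variable {V : Type*}

/-- The order forced on the letters of `u` and `v` in a word representing `G` with the cyclic
decoder, where `c` is the letter of each vertex: `u` comes first if the letter pair `(c u, c v)`
is in the decoder and `u`, `v` are adjacent, or if `(c v, c u)` is in the decoder and they are not.
The decoder is encoded as `x ↦ x + 1` in `Fin 3`. -/
def MustPrecede (G : SimpleGraph V) (c : V → Fin 3) (u v : V) : Prop :=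
  (c v = c u + 1 ∧ G.Adj u v) ∨ (c u = c v + 1 ∧ ¬G.Adj u v)

variable {G : SimpleGraph V}

theorem mustPrecede_iff_adj {c : V → Fin 3} {u v : V} (h : c v = c u + 1) :
    MustPrecede G c u v ↔ G.Adj u v := by
  simp [MustPrecede, h, fin_three_ne_add_one_of_eq_add_one]

theorem mustPrecede_iff_not_adj {c : V → Fin 3} {u v : V} (h : c u = c v + 1) :
    MustPrecede G c u v ↔ ¬G.Adj v u := by
  simp [MustPrecede, h, fin_three_ne_add_one_of_eq_add_one, G.adj_comm]

theorem isMultipartiteTournament_mustPrecede (G : SimpleGraph V) (c : V → Fin 3) :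
    IsMultipartiteTournament c (MustPrecede G c) where
  ne_of_rel h := fin_three_ne_iff.2 (h.imp And.left And.left)
  asymm {u v} h := by
    rcases h with ⟨hc, h⟩ | ⟨hc, h⟩
    · rwa [mustPrecede_iff_not_adj hc, not_not]
    · rwa [mustPrecede_iff_adj hc, G.adj_comm]
  total {u v} hne := by
    rcases fin_three_ne_iff.1 hne with hc | hc
    · rw [mustPrecede_iff_adj hc, mustPrecede_iff_not_adj hc]
      exact em _
    · rw [mustPrecede_iff_adj hc, mustPrecede_iff_not_adj hc]
      exact (em _).symm

theorem isEmpty_twoK2_embedding_induce_colorClass_iff {c : G.Coloring (Fin 3)} {i : Fin 3} :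
    IsEmpty (twoK2 ↪g G.induce (c.colorClass i ∪ c.colorClass (i + 1))) ↔
      ∀ a b a' b', c a = i → c b = i + 1 → c a' = i → c b' = i + 1 → MustPrecede G c a b →
        MustPrecede G c b a' → MustPrecede G c a' b' → ¬MustPrecede G c b' a := by
  have hcycle : ∀ {a b a' b'}, c a = i → c b = i + 1 → c a' = i → c b' = i + 1 →
      ((MustPrecede G c a b → MustPrecede G c b a' → MustPrecede G c a' b' →
        ¬MustPrecede G c b' a) ↔
      (G.Adj a b → ¬G.Adj b a' → G.Adj a' b' → G.Adj b' a)) := by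
    rintro a b a' b' rfl hb ha' hb'
    have hb_succ : c b = c a' + 1 := by rw [hb, ha']
    have hb'_succ : c b' = c a' + 1 := by rw [hb', ha']
    rw [mustPrecede_iff_adj hb, mustPrecede_iff_not_adj hb_succ, mustPrecede_iff_adj hb'_succ,
      mustPrecede_iff_not_adj hb', not_not, G.adj_comm a' b, G.adj_comm a b']
  rw [isEmpty_twoK2_embedding_induce_union_iff (c.isIndepSet_colorClass _)
    (c.isIndepSet_colorClass _)]
  constructor
  · intro h a b a' b' ha hb ha' hb'
    exact (hcycle ha hb ha' hb').2 (h a ha b hb a' ha' b' hb')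
  · intro h a ha b hb a' ha' b' hb'
    exact (hcycle ha hb ha' hb').1 (h a b a' b' ha hb ha' hb')

theorem forall_isEmpty_twoK2_embedding_iff_no_four_cycle {c : G.Coloring (Fin 3)} :
    (∀ i, IsEmpty (twoK2 ↪g G.induce (c.colorClass i ∪ c.colorClass (i + 1)))) ↔
      ∀ a b a' b', c a = c a' → c b = c b' → MustPrecede G c a b → MustPrecede G c b a' →
        MustPrecede G c a' b' → ¬MustPrecede G c b' a := by
  simp only [isEmpty_twoK2_embedding_induce_colorClass_iff]
  constructor
  · intro h a b a' b' ha hb hab hba' hab' hb'a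
    rcases fin_three_ne_iff.1 ((isMultipartiteTournament_mustPrecede G c).ne_of_rel hab)
      with hc | hc
    · exact h (c a) a b a' b' rfl hc ha.symm (hb ▸ hc) hab hba' hab' hb'a
    · exact h (c b) b a' b' a rfl (ha ▸ hc) hb.symm hc hba' hab' hb'a hab
  · intro h i a b a' b' ha hb ha' hb'
    exact h a b a' b' (ha.trans ha'.symm) (hb.trans hb'.symm)

theorem triangle_iff_three_cycle {c : V → Fin 3} {x y z : V} (hxy : c y = c x + 1)
    (hyz : c z = c y + 1) :
    G.Adj x y ∧ G.Adj y z ∧ G.Adj x z ↔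
      MustPrecede G c x y ∧ MustPrecede G c y z ∧ MustPrecede G c z x := by
  have hzx : c x = c z + 1 := fin_three_add_one_cycle hxy hyz
  rw [mustPrecede_iff_adj hxy, mustPrecede_iff_adj hyz, mustPrecede_iff_adj hzx, G.adj_comm z x]

theorem antitriangle_iff_three_cycle {c : V → Fin 3} {x y z : V} (hxy : c y = c x + 1)
    (hyz : c z = c y + 1) :
    ¬G.Adj x y ∧ ¬G.Adj y z ∧ ¬G.Adj x z ↔
      MustPrecede G c y x ∧ MustPrecede G c z y ∧ MustPrecede G c x z := by
  have hzx : c x = c z + 1 := fin_three_add_one_cycle hxy hyz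
  rw [mustPrecede_iff_not_adj hxy, mustPrecede_iff_not_adj hyz, mustPrecede_iff_not_adj hzx,
    G.adj_comm z x]

theorem no_rainbow_triangle_or_antitriangle_iff_no_three_cycle {c : V → Fin 3} :
    (∀ x, c x = 0 → ∀ y, c y = 1 → ∀ z, c z = 2 →
      ¬(G.Adj x y ∧ G.Adj y z ∧ G.Adj x z) ∧ ¬(¬G.Adj x y ∧ ¬G.Adj y z ∧ ¬G.Adj x z)) ↔
      ∀ u v w, MustPrecede G c u v → MustPrecede G c v w → ¬MustPrecede G c w u := by
  have hiff : ∀ x, c x = 0 → ∀ y, c y = 1 → ∀ z, c z = 2 →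
      (¬(G.Adj x y ∧ G.Adj y z ∧ G.Adj x z) ∧ ¬(¬G.Adj x y ∧ ¬G.Adj y z ∧ ¬G.Adj x z) ↔
        ¬(MustPrecede G c x y ∧ MustPrecede G c y z ∧ MustPrecede G c z x) ∧
        ¬(MustPrecede G c y x ∧ MustPrecede G c z y ∧ MustPrecede G c x z)) := by
    intro x hx y hy z hz
    have hxy : c y = c x + 1 := by rw [hx, hy, zero_add]
    have hyz : c z = c y + 1 := by rw [hy, hz]; rfl
    rw [triangle_iff_three_cycle hxy hyz, antitriangle_iff_three_cycle hxy hyz]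
  constructor
  · intro h u v w huv hvw hwu
    have hne := @(isMultipartiteTournament_mustPrecede G c).ne_of_rel
    have hcycle := fun x hx y hy z hz => (hiff x hx y hy z hz).1 (h x hx y hy z hz)
    rcases fin_three_permutation (hne huv) (hne hvw) (hne hwu) with
      ⟨hu, hv, hw⟩ | ⟨hu, hv, hw⟩ | ⟨hu, hv, hw⟩ | ⟨hu, hv, hw⟩ | ⟨hu, hv, hw⟩ | ⟨hu, hv, hw⟩
    · exact (hcycle u hu v hv w hw).1 ⟨huv, hvw, hwu⟩
    · exact (hcycle w hw u hu v hv).1 ⟨hwu, huv, hvw⟩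
    · exact (hcycle v hv w hw u hu).1 ⟨hvw, hwu, huv⟩
    · exact (hcycle u hu w hw v hv).2 ⟨hwu, hvw, huv⟩
    · exact (hcycle v hv u hu w hw).2 ⟨huv, hwu, hvw⟩
    · exact (hcycle w hw v hv u hu).2 ⟨hvw, huv, hwu⟩
  · intro h x hx y hy z hz
    exact (hiff x hx y hy z hz).2 ⟨fun ⟨hxy, hyz, hzx⟩ => h x y z hxy hyz hzx,
      fun ⟨hyx, hzy, hxz⟩ => h x z y hxz hzy hyx⟩

theorem forall_mustPrecede_lt_iff {L : Type*} [LinearOrder L] {c : G.Coloring (Fin 3)}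
    {e : V → L} (he : Function.Injective e) :
    (∀ u v, MustPrecede G c u v → e u < e v) ↔
      ∀ u v, G.Adj u v ↔ (e u < e v ∧ c v = c u + 1) ∨ (e v < e u ∧ c u = c v + 1) := by
  constructor
  · intro hlt u v
    constructor
    · intro huv
      rcases fin_three_ne_iff.1 (c.valid huv) with hc | hc
      · exact .inl ⟨hlt u v ((mustPrecede_iff_adj hc).2 huv), hc⟩
      · exact .inr ⟨hlt v u ((mustPrecede_iff_adj hc).2 huv.symm), hc⟩
    · rintro (⟨huv, hc⟩ | ⟨hvu, hc⟩)
      · by_contra hadj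
        exact huv.asymm (hlt v u ((mustPrecede_iff_not_adj hc).2 hadj))
      · by_contra hadj
        exact hvu.asymm (hlt u v ((mustPrecede_iff_not_adj hc).2 (mt G.adj_symm hadj)))
  · rintro hadj u v (⟨hc, huv⟩ | ⟨hc, huv⟩)
    · rcases (hadj u v).1 huv with ⟨hlt, -⟩ | ⟨-, hc'⟩
      · exact hlt
      · exact absurd hc' (fin_three_ne_add_one_of_eq_add_one hc)
    · have hne : e u ≠ e v := he.ne (ne_of_apply_ne c (fin_three_ne_iff.2 (.inr hc)))
      exact hne.lt_of_le (not_lt.1 fun hvu => huv ((hadj u v).2 (.inr ⟨hvu, hc⟩)))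

end MustPrecede

section Nice

variable {V : Type} {G : SimpleGraph V}

theorem niceTriple_colorClass_iff {c : G.Coloring (Fin 3)} :
    NiceTriple G (c.colorClass 0) (c.colorClass 1) (c.colorClass 2) ↔
      HasNoShortCycle c (MustPrecede G c) := by
  have hdisj : ∀ {i j}, i ≠ j → Disjoint (c.colorClass i) (c.colorClass j) := fun hij =>
    Set.disjoint_left.2 fun _ hi hj => hij (hi.symm.trans hj)
  have hindep : ∀ i, IsIndepSetOn G (c.colorClass i) := c.isIndepSet_colorClass
  have hfour := forall_isEmpty_twoK2_embedding_iff_no_four_cycle (c := c)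
  have hthree := no_rainbow_triangle_or_antitriangle_iff_no_three_cycle (G := G) (c := c)
  simp only [Fin.forall_fin_succ] at hfour
  constructor
  · rintro ⟨-, -, -, -, -, -, hAB, hBC, hCA, htri⟩
    exact ⟨hthree.1 htri _ _ _, hfour.1 ⟨hAB, hBC, hCA, nofun⟩ _ _ _ _⟩
  · rintro ⟨hthree', hfour'⟩
    obtain ⟨hAB, hBC, hCA, -⟩ := hfour.2 fun _ _ _ _ => hfour'
    exact ⟨hdisj (by decide), hdisj (by decide), hdisj (by decide), hindep 0, hindep 1, hindep 2,
      hAB, hBC, hCA, hthree.2 fun _ _ _ => hthree'⟩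

theorem isNice_iff_exists_niceTriple_colorClass :
    IsNice G ↔ ∃ c : G.Coloring (Fin 3),
      NiceTriple G (c.colorClass 0) (c.colorClass 1) (c.colorClass 2) := by
  constructor
  · rintro ⟨A, B, C, hcover, hnice⟩
    have ⟨hAB, hAC, hBC, hA, hB, hC, _⟩ := hnice
    obtain ⟨c, hc⟩ := exists_coloring_colorClass_eq (G := G) (S := ![A, B, C])
      (fun v => by simpa [Fin.exists_fin_succ, or_assoc] using hcover.ge (Set.mem_univ v))
      (fun i j hij => by
        fin_cases i <;> fin_cases j <;> simp_all [Function.onFun, disjoint_comm])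
      (fun i => by fin_cases i <;> assumption)
    refine ⟨c, ?_⟩
    rwa [hc 0, hc 1, hc 2]
  · rintro ⟨c, hc⟩
    refine ⟨_, _, _, Set.eq_univ_of_forall fun v => ?_, hc⟩
    have hcolor : ∀ i : Fin 3, (i = 0 ∨ i = 1) ∨ i = 2 := by decide
    exact hcolor (c v)

theorem isNice_iff_exists_hasNoShortCycle :
    IsNice G ↔ ∃ c : G.Coloring (Fin 3), HasNoShortCycle c (MustPrecede G c) := by
  simp only [isNice_iff_exists_niceTriple_colorClass, niceTriple_colorClass_iff]

end Nice

section Cyclic3Letter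

theorem cyclicDecoder_iff {x y : Fin 3} : cyclicDecoder x y ↔ y = x + 1 := by
  unfold cyclicDecoder
  decide +revert

variable {V : Type} {G : SimpleGraph V}

theorem isCyclic3Letter_iff_exists_numbering :
    IsCyclic3Letter G ↔ ∃ (c : G.Coloring (Fin 3)) (n : ℕ) (e : V ≃ Fin n),
      ∀ u v, MustPrecede G c u v → e u < e v := by
  simp only [fun (c : G.Coloring (Fin 3)) n (e : V ≃ Fin n) =>
    forall_mustPrecede_lt_iff (c := c) e.injective]
  constructor
  · rintro ⟨n, w, ⟨φ⟩⟩
    have hadj : ∀ u v, G.Adj u v ↔ (φ u < φ v ∧ w (φ v) = w (φ u) + 1) ∨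
        (φ v < φ u ∧ w (φ u) = w (φ v) + 1) := by
      intro u v
      simp only [← φ.map_adj_iff, letterGraph, cyclicDecoder_iff]
    exact ⟨.mk (w ∘ φ) fun {u v} huv =>
      fin_three_ne_iff.2 (((hadj u v).1 huv).imp And.right And.right), n, φ.toEquiv, hadj⟩
  · rintro ⟨c, n, e, hadj⟩
    refine ⟨n, c ∘ e.symm, ⟨⟨e, fun {u v} => ?_⟩⟩⟩
    simp only [letterGraph, cyclicDecoder_iff, Function.comp_apply, e.symm_apply_apply, hadj u v]

theorem isCyclic3Letter_iff_exists_irrefl_transGen [Finite V] :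
    IsCyclic3Letter G ↔
      ∃ c : G.Coloring (Fin 3), Std.Irrefl (Relation.TransGen (MustPrecede G c)) := by
  simp only [isCyclic3Letter_iff_exists_numbering, irrefl_transGen_iff_exists_numbering]

end Cyclic3Letter

/-- A graph is a 3-letter graph with the decoder `{(a,b),(b,c),(c,a)}` iff it is nice. -/
theorem cyclic3Letter_iff_nice {V : Type} [Fintype V] (G : SimpleGraph V) :
    IsCyclic3Letter G ↔ IsNice G := by
  rw [isCyclic3Letter_iff_exists_irrefl_transGen, isNice_iff_exists_hasNoShortCycle]
  exact exists_congr fun c =>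
    (isMultipartiteTournament_mustPrecede G c).irrefl_transGen_iff_hasNoShortCycle
end

section
/- Let G be a graph and let H₁ and H₂ be nice induced subgraphs of G with disjoint vertex sets V(H₁) = A₁ ∪ B₁ ∪ C₁ and V(H₂) = A₂ ∪ B₂ ∪ C₂ (with the respective nice partitions). If the subgraphs of G induced by A₁ ∪ B₂, by B₁ ∪ C₂ and by C₁ ∪ A₂ are complete bipartite (every vertex of the first set adjacent to every vertex of the second), and the subgraphs induced by A₁ ∪ A₂, A₁ ∪ C₂, B₁ ∪ A₂, B₁ ∪ B₂, C₁ ∪ B₂ and C₁ ∪ C₂ are edgeless, then the subgraph of G induced by V(H₁) ∪ V(H₂) is nice with the partition (A₁ ∪ A₂) ∪ (B₁ ∪ B₂) ∪ (C₁ ∪ C₂). -/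
/-!
A bipartite graph is `2K₂`-free exactly when its adjacency relation is Ferrers, that is, when the
neighbourhoods on one side form a chain. Completely joining `X₁` to `Y₂` while leaving `Y₁` and `X₂`
non-adjacent stacks the chain of `(X₁, Y₁)` on top of that of `(X₂, Y₂)`, so the Ferrers property
survives. A vertex triple meeting both pieces always contains both an edge and a non-edge between
the pieces, so it is neither a triangle nor an anti-triangle.
-/

/-- The relation `r` restricted to `s × t` is a Ferrers relation, i.e. the sets
`{y ∈ t | r x y}` for `x ∈ s` form a chain under inclusion. For the adjacency relation between two
independent sets this says that the bipartite graph is `2K₂`-free. -/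
def FerrersOn {α β : Type*} (r : α → β → Prop) (s : Set α) (t : Set β) : Prop :=
  ∀ x ∈ s, ∀ x' ∈ s, ∀ y ∈ t, ∀ y' ∈ t, r x y → r x' y' → r x y' ∨ r x' y

theorem FerrersOn.union_union {α β : Type*} {r : α → β → Prop} {s₁ s₂ : Set α} {t₁ t₂ : Set β}
    (h₁ : FerrersOn r s₁ t₁) (h₂ : FerrersOn r s₂ t₂)
    (h_complete : ∀ x ∈ s₁, ∀ y ∈ t₂, r x y) (h_empty : ∀ x ∈ s₂, ∀ y ∈ t₁, ¬ r x y) :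
    FerrersOn r (s₁ ∪ s₂) (t₁ ∪ t₂) := by
  intro x hx x' hx' y hy y' hy' hxy hx'y'
  by_cases h_cross : (x ∈ s₁ ∧ y' ∈ t₂) ∨ (x' ∈ s₁ ∧ y ∈ t₂)
  · exact h_cross.imp (fun h ↦ h_complete x h.1 y' h.2) (fun h ↦ h_complete x' h.1 y h.2)
  -- No pair in `s₂ × t₁` is related, so `hxy` and `hx'y'` now force all points into one piece.
  have same_piece :
      (x ∈ s₁ ∧ x' ∈ s₁ ∧ y ∈ t₁ ∧ y' ∈ t₁) ∨ (x ∈ s₂ ∧ x' ∈ s₂ ∧ y ∈ t₂ ∧ y' ∈ t₂) := by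
    grind
  obtain ⟨hx, hx', hy, hy'⟩ | ⟨hx, hx', hy, hy'⟩ := same_piece
  · exact h₁ x hx x' hx' y hy y' hy' hxy hx'y'
  · exact h₂ x hx x' hx' y hy y' hy' hxy hx'y'

theorem twoK2_adj {i j : Fin 4} :
    twoK2.Adj i j ↔ s(i, j) = s(0, 1) ∨ s(i, j) = s(2, 3) := by
  simp only [twoK2, SimpleGraph.fromEdgeSet_adj, Set.mem_insert_iff, Set.mem_singleton_iff]
  decide +revert

theorem isEmpty_twoK2_embedding_iff {V : Type*} {G : SimpleGraph V} :
    IsEmpty (twoK2 ↪g G) ↔ ∀ a b c d, G.Adj a b → G.Adj c d →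
      G.Adj a c ∨ G.Adj a d ∨ G.Adj b c ∨ G.Adj b d := by
  constructor
  · intro h_free a b c d hab hcd
    by_contra! ⟨hac, had, hbc, hbd⟩
    have h_adj : ∀ i j, G.Adj (![a, b, c, d] i) (![a, b, c, d] j) ↔ twoK2.Adj i j := by
      simp [Fin.forall_fin_succ, twoK2_adj, G.adj_comm, *]
    -- Injectivity is automatic, because no two vertices of `2K₂` have the same neighbours.
    have h_twin : ∀ i j, (∀ k, twoK2.Adj i k ↔ twoK2.Adj j k) → i = j := by
      simp only [twoK2_adj]
      decide
    exact h_free.false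
      ⟨⟨![a, b, c, d], fun i j hij ↦ h_twin i j fun k ↦ by rw [← h_adj, ← h_adj, hij]⟩, h_adj _ _⟩
  · refine fun h ↦ ⟨fun f ↦ ?_⟩
    simpa [twoK2_adj] using h (f 0) (f 1) (f 2) (f 3)

namespace IsIndepSetOn

variable {V : Type} {G : SimpleGraph V} {s t : Set V}

theorem not_adj (hs : IsIndepSetOn G s) {x y : V} (hx : x ∈ s) (hy : y ∈ s) : ¬ G.Adj x y :=
  fun h ↦ hs hx hy h.ne h

theorem union (hs : IsIndepSetOn G s) (ht : IsIndepSetOn G t)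
    (hst : ∀ x ∈ s, ∀ y ∈ t, ¬ G.Adj x y) : IsIndepSetOn G (s ∪ t) :=
  Set.pairwise_union.2 ⟨hs, ht, fun x hx y hy _ ↦ ⟨hst x hx y hy, fun h ↦ hst x hx y hy h.symm⟩⟩

theorem mem_of_adj (hs : IsIndepSetOn G s) (ht : IsIndepSetOn G t) {x y : V}
    (hx : x ∈ s ∪ t) (hy : y ∈ s ∪ t) (h : G.Adj x y) : x ∈ s ∧ y ∈ t ∨ y ∈ s ∧ x ∈ t := by
  grind [not_adj]

theorem isEmpty_twoK2_embedding_induce_union_iff (hs : IsIndepSetOn G s) (ht : IsIndepSetOn G t) :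
    IsEmpty (twoK2 ↪g G.induce (s ∪ t)) ↔ FerrersOn G.Adj s t := by
  rw [isEmpty_twoK2_embedding_iff]
  constructor
  · intro h x hx x' hx' y hy y' hy' hxy hx'y'
    have := h ⟨x, .inl hx⟩ ⟨y, .inr hy⟩ ⟨x', .inl hx'⟩ ⟨y', .inr hy'⟩ hxy hx'y'
    simpa [hs.not_adj hx hx', ht.not_adj hy hy', G.adj_comm y] using this
  · rintro h ⟨a, ha⟩ ⟨b, hb⟩ ⟨c, hc⟩ ⟨d, hd⟩ hab hcd
    simp only [SimpleGraph.comap_adj, Function.Embedding.subtype_apply] at hab hcd ⊢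
    obtain ⟨ha, hb⟩ | ⟨hb, ha⟩ := hs.mem_of_adj ht ha hb hab <;>
      obtain ⟨hc, hd⟩ | ⟨hd, hc⟩ := hs.mem_of_adj ht hc hd hcd
    all_goals grind [FerrersOn, G.adj_comm]

theorem isEmpty_twoK2_embedding_induce_union_union {s₁ s₂ t₁ t₂ : Set V}
    (hs₁ : IsIndepSetOn G s₁) (hs₂ : IsIndepSetOn G s₂)
    (ht₁ : IsIndepSetOn G t₁) (ht₂ : IsIndepSetOn G t₂)
    (hs₁s₂ : ∀ x ∈ s₁, ∀ y ∈ s₂, ¬ G.Adj x y) (ht₁t₂ : ∀ x ∈ t₁, ∀ y ∈ t₂, ¬ G.Adj x y)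
    (hs₁t₂ : ∀ x ∈ s₁, ∀ y ∈ t₂, G.Adj x y) (ht₁s₂ : ∀ x ∈ t₁, ∀ y ∈ s₂, ¬ G.Adj x y)
    (h₁ : IsEmpty (twoK2 ↪g G.induce (s₁ ∪ t₁))) (h₂ : IsEmpty (twoK2 ↪g G.induce (s₂ ∪ t₂))) :
    IsEmpty (twoK2 ↪g G.induce ((s₁ ∪ s₂) ∪ (t₁ ∪ t₂))) := by
  rw [isEmpty_twoK2_embedding_induce_union_iff hs₁ ht₁] at h₁
  rw [isEmpty_twoK2_embedding_induce_union_iff hs₂ ht₂] at h₂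
  rw [isEmpty_twoK2_embedding_induce_union_iff (hs₁.union hs₂ hs₁s₂) (ht₁.union ht₂ ht₁t₂)]
  exact h₁.union_union h₂ hs₁t₂ fun x hx y hy h ↦ ht₁s₂ y hy x hx h.symm

end IsIndepSetOn

theorem joining_lemma_general {V : Type} (G : SimpleGraph V)
    (A₁ B₁ C₁ A₂ B₂ C₂ : Set V)
    (h₁ : NiceTriple G A₁ B₁ C₁) (h₂ : NiceTriple G A₂ B₂ C₂)
    (hdisj : Disjoint (A₁ ∪ B₁ ∪ C₁) (A₂ ∪ B₂ ∪ C₂))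
    (hA₁B₂ : ∀ x ∈ A₁, ∀ y ∈ B₂, G.Adj x y)
    (hB₁C₂ : ∀ x ∈ B₁, ∀ y ∈ C₂, G.Adj x y)
    (hC₁A₂ : ∀ x ∈ C₁, ∀ y ∈ A₂, G.Adj x y)
    (hA₁A₂ : ∀ x ∈ A₁, ∀ y ∈ A₂, ¬ G.Adj x y)
    (hA₁C₂ : ∀ x ∈ A₁, ∀ y ∈ C₂, ¬ G.Adj x y)
    (hB₁A₂ : ∀ x ∈ B₁, ∀ y ∈ A₂, ¬ G.Adj x y)
    (hB₁B₂ : ∀ x ∈ B₁, ∀ y ∈ B₂, ¬ G.Adj x y)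
    (hC₁B₂ : ∀ x ∈ C₁, ∀ y ∈ B₂, ¬ G.Adj x y)
    (hC₁C₂ : ∀ x ∈ C₁, ∀ y ∈ C₂, ¬ G.Adj x y) :
    NiceTriple G (A₁ ∪ A₂) (B₁ ∪ B₂) (C₁ ∪ C₂) := by
  obtain ⟨disjAB₁, disjAC₁, disjBC₁, hA₁, hB₁, hC₁, freeAB₁, freeBC₁, freeCA₁, h_triple₁⟩ := h₁
  obtain ⟨disjAB₂, disjAC₂, disjBC₂, hA₂, hB₂, hC₂, freeAB₂, freeBC₂, freeCA₂, h_triple₂⟩ := h₂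
  have h_parts : Disjoint (A₁ ∪ A₂) (B₁ ∪ B₂) ∧ Disjoint (A₁ ∪ A₂) (C₁ ∪ C₂) ∧
      Disjoint (B₁ ∪ B₂) (C₁ ∪ C₂) := by
    simp only [Set.disjoint_union_left, Set.disjoint_union_right] at hdisj ⊢
    grind
  refine ⟨h_parts.1, h_parts.2.1, h_parts.2.2,
    hA₁.union hA₂ hA₁A₂, hB₁.union hB₂ hB₁B₂, hC₁.union hC₂ hC₁C₂,
    hA₁.isEmpty_twoK2_embedding_induce_union_union hA₂ hB₁ hB₂
      hA₁A₂ hB₁B₂ hA₁B₂ hB₁A₂ freeAB₁ freeAB₂,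
    hB₁.isEmpty_twoK2_embedding_induce_union_union hB₂ hC₁ hC₂
      hB₁B₂ hC₁C₂ hB₁C₂ hC₁B₂ freeBC₁ freeBC₂,
    hC₁.isEmpty_twoK2_embedding_induce_union_union hC₂ hA₁ hA₂
      hC₁C₂ hA₁A₂ hC₁A₂ hA₁C₂ freeCA₁ freeCA₂, ?_⟩
  rintro a (ha | ha) b (hb | hb) c (hc | hc)
  · exact h_triple₁ a ha b hb c hc
  · exact ⟨fun h ↦ hA₁C₂ a ha c hc h.2.2, fun h ↦ h.2.1 (hB₁C₂ b hb c hc)⟩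
  · exact ⟨fun h ↦ hC₁B₂ c hc b hb h.2.1.symm, fun h ↦ h.1 (hA₁B₂ a ha b hb)⟩
  · exact ⟨fun h ↦ hA₁C₂ a ha c hc h.2.2, fun h ↦ h.1 (hA₁B₂ a ha b hb)⟩
  · exact ⟨fun h ↦ hB₁A₂ b hb a ha h.1.symm, fun h ↦ h.2.2 (hC₁A₂ c hc a ha).symm⟩
  · exact ⟨fun h ↦ hB₁A₂ b hb a ha h.1.symm, fun h ↦ h.2.1 (hB₁C₂ b hb c hc)⟩
  · exact ⟨fun h ↦ hC₁B₂ c hc b hb h.2.1.symm, fun h ↦ h.2.2 (hC₁A₂ c hc a ha).symm⟩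
  · exact h_triple₂ a ha b hb c hc

/-- The joining lemma: two vertex-disjoint nice triples whose parts are joined
completely between `A₁B₂`, `B₁C₂`, `C₁A₂` and not at all between the remaining six
pairs combine into a nice triple. -/
theorem joining_lemma {V : Type} [Fintype V] (G : SimpleGraph V)
    (A₁ B₁ C₁ A₂ B₂ C₂ : Set V)
    (h₁ : NiceTriple G A₁ B₁ C₁) (h₂ : NiceTriple G A₂ B₂ C₂)
    (hdisj : Disjoint (A₁ ∪ B₁ ∪ C₁) (A₂ ∪ B₂ ∪ C₂))
    (hA₁B₂ : ∀ x ∈ A₁, ∀ y ∈ B₂, G.Adj x y)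
    (hB₁C₂ : ∀ x ∈ B₁, ∀ y ∈ C₂, G.Adj x y)
    (hC₁A₂ : ∀ x ∈ C₁, ∀ y ∈ A₂, G.Adj x y)
    (hA₁A₂ : ∀ x ∈ A₁, ∀ y ∈ A₂, ¬ G.Adj x y)
    (hA₁C₂ : ∀ x ∈ A₁, ∀ y ∈ C₂, ¬ G.Adj x y)
    (hB₁A₂ : ∀ x ∈ B₁, ∀ y ∈ A₂, ¬ G.Adj x y)
    (hB₁B₂ : ∀ x ∈ B₁, ∀ y ∈ B₂, ¬ G.Adj x y)
    (hC₁B₂ : ∀ x ∈ C₁, ∀ y ∈ B₂, ¬ G.Adj x y)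
    (hC₁C₂ : ∀ x ∈ C₁, ∀ y ∈ C₂, ¬ G.Adj x y) :
    NiceTriple G (A₁ ∪ A₂) (B₁ ∪ B₂) (C₁ ∪ C₂) := by
  exact joining_lemma_general G A₁ B₁ C₁ A₂ B₂ C₂ h₁ h₂ hdisj
    hA₁B₂ hB₁C₂ hC₁A₂ hA₁A₂ hA₁C₂ hB₁A₂ hB₁B₂ hC₁B₂ hC₁C₂
end

section
/- A graph G is a 3-letter graph with the decoder {(a,b),(b,c),(c,a)} over the alphabet {a,b,c} if and only if G contains no induced subgraph isomorphic to any of K₃ (the triangle), 2K₂ + K₁ (two disjoint edges plus an isolated vertex), C₅ + K₁ (a chordless 5-cycle plus an isolated vertex), or C₆ (the chordless 6-cycle). -/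
/-- The triangle `K₃`. -/
def K3 : SimpleGraph (Fin 3) := ⊤

/-- The graph `2K₂ + K₁`: two disjoint edges plus an isolated vertex. -/
def twoK2K1 : SimpleGraph (Fin 5) := SimpleGraph.fromEdgeSet {s(0,1), s(2,3)}

/-- The graph `C₅ + K₁`: a chordless 5-cycle plus an isolated vertex. -/
def C5K1 : SimpleGraph (Fin 6) :=
  SimpleGraph.fromEdgeSet {s(0,1), s(1,2), s(2,3), s(3,4), s(4,0)}

/-- The chordless 6-cycle `C₆`. -/
def C6 : SimpleGraph (Fin 6) :=
  SimpleGraph.fromEdgeSet {s(0,1), s(1,2), s(2,3), s(3,4), s(4,5), s(5,0)}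

/-! A proper colouring by `Fin 3` prescribes the relative order of any two vertices of different
colours in a word that spells the graph. The prescribed relation orients a complete multipartite
graph, and such an orientation is acyclic as soon as it has no directed cycle of length at most
four. Directed triangles come from triangles and from rainbow independent triples, and directed
4-cycles from induced `2K₂`s between two colour classes, so `G` is a letter graph iff some proper
colouring avoids these three configurations.

For a graph without the forbidden subgraphs the classes of such a colouring are `N(v)`,
`N(x) \ N(v)` and the rest, where `v` has an inclusion-minimal neighbourhood and `x ∉ N(v)` has an
inclusion-maximal set of neighbours outside `N(v)`. A vertex missing a neighbour of `v` then has a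
neighbour outside `N(v)`, which supplies the remaining vertices of the forbidden subgraphs. -/

section Acyclic

variable {α ι : Type*} {r : α → α → Prop}

theorem exists_linearOrder_lt_of_not_transGen (h : ∀ a, ¬ Relation.TransGen r a a) :
    ∃ _ : LinearOrder α, ∀ a b, r a b → a < b := by
  have : IsStrictOrder α (Relation.TransGen r) := { irrefl := h, trans := fun _ _ _ => .trans }
  let _ : PartialOrder α := partialOrderOfSO (Relation.TransGen r)
  refine ⟨(inferInstance : LinearOrder (LinearExtension α)), fun a b hab => ?_⟩
  have hlt : a < b := Relation.TransGen.single hab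
  exact lt_of_le_of_ne (toLinearExtension.monotone hlt.le) hlt.ne

theorem not_transGen_of_no_short_cycles (color : α → ι)
    (hne : ∀ a b, r a b → color a ≠ color b)
    (htotal : ∀ a b, color a ≠ color b → r a b ∨ r b a)
    (h₂ : ∀ a b, r a b → ¬ r b a)
    (h₃ : ∀ a b c, r a b → r b c → ¬ r c a)
    (h₄ : ∀ a b c d, color a = color c → color b = color d →
      r a b → r b c → r c d → ¬ r d a) (a : α) :
    ¬ Relation.TransGen r a a := by
  have no_four_cycle (a b c d : α) (hab : r a b) (hbc : r b c) (hcd : r c d) : ¬ r d a := by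
    intro hda
    by_cases hac : color a = color c
    · by_cases hbd : color b = color d
      · exact h₄ a b c d hac hbd hab hbc hcd hda
      · rcases htotal b d hbd with h | h
        · exact h₃ a b d hab h hda
        · exact h₃ b c d hbc hcd h
    · rcases htotal a c hac with h | h
      · exact h₃ a c d h hcd hda
      · exact h₃ a b c hab hbc h
  have two_steps (b : α) (h : Relation.TransGen r a b) : r a b ∨ ∃ c, r a c ∧ r c b := by
    induction h with
    | single hab => exact .inl hab
    | @tail b d _ hbd ih =>
      obtain hab | ⟨c, hac, hcb⟩ := ih
      · exact .inr ⟨b, hab, hbd⟩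
      by_cases had : color a = color d
      · rcases htotal c d (had ▸ (hne a c hac).symm) with hcd | hdc
        · exact .inr ⟨c, hac, hcd⟩
        · exact (h₃ c b d hcb hbd hdc).elim
      · rcases htotal a d had with h | hda
        · exact .inl h
        · exact (no_four_cycle a c b d hac hcb hbd hda).elim
  intro h
  rcases two_steps a h with haa | ⟨b, hab, hba⟩
  · exact hne a a haa rfl
  · exact h₂ a b hab hba

end Acyclic

theorem exists_iso_letterGraph {V α : Type*} [Finite V] [LinearOrder V] {G : SimpleGraph V}
    {P : α → α → Prop} {c : V → α} (h : ∀ u v, u < v → (G.Adj u v ↔ P (c u) (c v))) :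
    ∃ (n : ℕ) (w : Fin n → α), Nonempty (G ≃g letterGraph P w) := by
  have := Fintype.ofFinite V
  let e : Fin (Fintype.card V) ≃o V := monoEquivOfFin V rfl
  refine ⟨Fintype.card V, c ∘ e, ⟨⟨e.symm.toEquiv, fun {u v} => ?_⟩⟩⟩
  change (e.symm u < e.symm v ∧ P (c (e (e.symm u))) (c (e (e.symm v))) ∨
    e.symm v < e.symm u ∧ P (c (e (e.symm v))) (c (e (e.symm u)))) ↔ G.Adj u v
  simp only [OrderIso.apply_symm_apply, OrderIso.lt_iff_lt]
  rcases lt_trichotomy u v with huv | rfl | hvu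
  · simp only [huv, huv.asymm, true_and, false_and, or_false, h u v huv]
  · simp only [lt_irrefl, false_and, or_false, SimpleGraph.irrefl]
  · simp only [hvu, hvu.asymm, true_and, false_and, false_or, G.adj_comm u v, h v u hvu]

theorem cyclicDecoder_iff_eq_add_one (x y : Fin 3) : cyclicDecoder x y ↔ y = x + 1 := by
  unfold cyclicDecoder
  decide +revert

/-- The order that a word imposes on two of its positions `u`, `v` when it spells `G` with the
cyclic decoder and has the letter `c u` at position `u`: vertices in different classes are adjacent
exactly if the letter following cyclically also comes later in the word. -/
def Precedes {V : Type*} (G : SimpleGraph V) (c : V → Fin 3) (u v : V) : Prop :=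
  (c v = c u + 1 ∧ G.Adj u v) ∨ (c u = c v + 1 ∧ ¬ G.Adj u v)

/-- A proper 3-colouring without the three configurations that force a directed cycle in
`Precedes`: a triangle, a rainbow independent triple, and an induced `2K₂` between two classes. The
finite graphs with such a colouring are the letter graphs of the cyclic decoder. -/
structure IsCyclicColoring {V : Type*} (G : SimpleGraph V) (c : V → Fin 3) : Prop where
  ne_of_adj {u v : V} : G.Adj u v → c u ≠ c v
  not_adj_of_adj_of_adj {u v w : V} : G.Adj u v → G.Adj v w → ¬ G.Adj u w
  not_rainbow {u v w : V} : ¬ G.Adj u v → ¬ G.Adj v w → ¬ G.Adj u w →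
    c u = c v ∨ c v = c w ∨ c u = c w
  not_bichromatic {u v u' v' : V} : G.Adj u v → G.Adj u' v' → ¬ G.Adj u v' → ¬ G.Adj u' v →
    c u = c u' → c v ≠ c v'

section Precedes

variable {V : Type*} {G : SimpleGraph V} {c : V → Fin 3} {u v w : V}

theorem Precedes.ne (h : Precedes G c u v) : c u ≠ c v := by
  grind [Precedes]

theorem precedes_or_precedes (h : c u ≠ c v) : Precedes G c u v ∨ Precedes G c v u := by
  have : c v = c u + 1 ∨ c u = c v + 1 := by grind
  grind [Precedes, G.adj_comm u v]

theorem Precedes.asymm (h : Precedes G c u v) : ¬ Precedes G c v u := by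
  grind [Precedes, G.adj_comm u v]

theorem IsCyclicColoring.not_precedes_three_cycle (hc : IsCyclicColoring G c)
    (huv : Precedes G c u v) (hvw : Precedes G c v w) : ¬ Precedes G c w u := by
  intro hwu
  have hrainbow := hc.not_rainbow (u := u) (v := v) (w := w)
  rcases huv with ⟨cuv, huv⟩ | ⟨cuv, huv⟩ <;> rcases hvw with ⟨cvw, hvw⟩ | ⟨cvw, hvw⟩ <;>
    rcases hwu with ⟨cwu, hwu⟩ | ⟨cwu, hwu⟩
  · exact hc.not_adj_of_adj_of_adj huv hvw hwu.symm
  all_goals grind [G.adj_comm u w]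

theorem IsCyclicColoring.not_precedes_four_cycle (hc : IsCyclicColoring G c) {u' v' : V}
    (hu : c u = c u') (hv : c v = c v') (huv : Precedes G c u v) (hvu' : Precedes G c v u')
    (huv' : Precedes G c u' v') : ¬ Precedes G c v' u := by
  intro hvu
  have h := hc.not_bichromatic (u := u) (v := v) (u' := u') (v' := v')
  have h' := hc.not_bichromatic (u := u) (v := v') (u' := u') (v' := v)
  grind [Precedes, SimpleGraph.adj_comm]

theorem IsCyclicColoring.exists_linearOrder (hc : IsCyclicColoring G c) :
    ∃ _ : LinearOrder V, ∀ u v, Precedes G c u v → u < v :=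
  exists_linearOrder_lt_of_not_transGen <| not_transGen_of_no_short_cycles c
    (fun _ _ => Precedes.ne) (fun _ _ => precedes_or_precedes) (fun _ _ => Precedes.asymm)
    (fun _ _ _ => hc.not_precedes_three_cycle) (fun _ _ _ _ => hc.not_precedes_four_cycle)

theorem IsCyclicColoring.isCyclic3Letter {V : Type} [Finite V] {G : SimpleGraph V}
    {c : V → Fin 3} (hc : IsCyclicColoring G c) : IsCyclic3Letter G := by
  obtain ⟨_, hlt⟩ := hc.exists_linearOrder
  refine exists_iso_letterGraph (c := c) fun u v huv => ?_
  rw [cyclicDecoder_iff_eq_add_one]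
  refine ⟨fun hadj => ?_, fun hcv => ?_⟩
  · by_contra hcv
    have hcu : c u = c v + 1 := by grind [hc.ne_of_adj hadj]
    exact huv.asymm (hlt v u (.inl ⟨hcu, hadj.symm⟩))
  · by_contra hadj
    exact huv.asymm (hlt v u (.inr ⟨hcv, fun h => hadj h.symm⟩))

theorem add_one_cycle_of_pairwise_ne (x y z : Fin 3) (hxy : x ≠ y) (hyz : y ≠ z) (hxz : x ≠ z) :
    (y = x + 1 ∧ z = y + 1 ∧ x = z + 1) ∨ (x = y + 1 ∧ y = z + 1 ∧ z = x + 1) := by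
  grind

theorem isCyclicColoring_of_precedes_lt [Preorder V] (hne : ∀ u v, G.Adj u v → c u ≠ c v)
    (hlt : ∀ u v, Precedes G c u v → u < v) :
    IsCyclicColoring G c where
  ne_of_adj {u v} := hne u v
  not_adj_of_adj_of_adj {u v w} huv hvw huw := by
    rcases add_one_cycle_of_pairwise_ne _ _ _ (hne u v huv) (hne v w hvw) (hne u w huw) with
      ⟨hv, hw, hu⟩ | ⟨hu, hv, hw⟩
    · exact (((hlt u v (.inl ⟨hv, huv⟩)).trans (hlt v w (.inl ⟨hw, hvw⟩))).trans
        (hlt w u (.inl ⟨hu, huw.symm⟩))).false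
    · exact (((hlt u w (.inl ⟨hw, huw⟩)).trans (hlt w v (.inl ⟨hv, hvw.symm⟩))).trans
        (hlt v u (.inl ⟨hu, huv.symm⟩))).false
  not_rainbow {u v w} huv hvw huw := by
    by_contra! hcolor
    obtain ⟨cuv, cvw, cuw⟩ := hcolor
    rcases add_one_cycle_of_pairwise_ne _ _ _ cuv cvw cuw with ⟨hv, hw, hu⟩ | ⟨hu, hv, hw⟩
    · exact (((hlt u w (.inr ⟨hu, huw⟩)).trans (hlt w v (.inr ⟨hw, mt .symm hvw⟩))).trans
        (hlt v u (.inr ⟨hv, mt .symm huv⟩))).false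
    · exact (((hlt u v (.inr ⟨hu, huv⟩)).trans (hlt v w (.inr ⟨hv, hvw⟩))).trans
        (hlt w u (.inr ⟨hw, mt .symm huw⟩))).false
  not_bichromatic {u v u' v'} huv huv' hnuv' hnu'v hu hv := by
    have no_cycle (a b a' b' : V) (hab : Precedes G c a b) (hba' : Precedes G c b a')
        (hab' : Precedes G c a' b') (hba : Precedes G c b' a) : False :=
      ((((hlt a b hab).trans (hlt b a' hba')).trans (hlt a' b' hab')).trans (hlt b' a hba)).false
    rcases precedes_or_precedes (hne u v huv) with h | h
    · exact no_cycle u v u' v' h (by grind [Precedes, SimpleGraph.adj_comm])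
        (by grind [Precedes]) (by grind [Precedes, SimpleGraph.adj_comm])
    · exact no_cycle v u v' u' h (by grind [Precedes, SimpleGraph.adj_comm])
        (by grind [Precedes, SimpleGraph.adj_comm]) (by grind [Precedes, SimpleGraph.adj_comm])

theorem isCyclicColoring_letterGraph {n : ℕ} (w : Fin n → Fin 3) :
    IsCyclicColoring (letterGraph cyclicDecoder w) w := by
  refine isCyclicColoring_of_precedes_lt (fun i j hij => ?_) (fun i j hij => ?_)
  · grind [letterGraph, cyclicDecoder_iff_eq_add_one]
  · have := hij.ne
    grind [Precedes, letterGraph, cyclicDecoder_iff_eq_add_one]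

theorem IsCyclicColoring.comap {V W : Type*} {G : SimpleGraph V} {H : SimpleGraph W}
    {c : V → Fin 3} (hc : IsCyclicColoring G c) (f : H ↪g G) : IsCyclicColoring H (c ∘ f) where
  ne_of_adj h := hc.ne_of_adj (f.map_adj_iff.2 h)
  not_adj_of_adj_of_adj {u v w} := by
    simpa only [f.map_adj_iff] using hc.not_adj_of_adj_of_adj (u := f u) (v := f v) (w := f w)
  not_rainbow {u v w} := by
    simpa only [f.map_adj_iff, Function.comp_apply] using
      hc.not_rainbow (u := f u) (v := f v) (w := f w)
  not_bichromatic {u v u' v'} := by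
    simpa only [f.map_adj_iff, Function.comp_apply] using
      hc.not_bichromatic (u := f u) (v := f v) (u' := f u') (v' := f v')

theorem IsCyclic3Letter.exists_isCyclicColoring {V : Type} {G : SimpleGraph V}
    (h : IsCyclic3Letter G) : ∃ c, IsCyclicColoring G c :=
  let ⟨_, w, ⟨e⟩⟩ := h
  ⟨w ∘ e, (isCyclicColoring_letterGraph w).comap e.toEmbedding⟩

end Precedes

section Obstructions

theorem not_isCyclicColoring_K3 (c : Fin 3 → Fin 3) : ¬ IsCyclicColoring K3 c :=
  fun hc => hc.not_adj_of_adj_of_adj (u := 0) (v := 1) (w := 2)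
    (by simp [K3]) (by simp [K3]) (by simp [K3])

theorem not_isCyclicColoring_twoK2K1 (c : Fin 5 → Fin 3) : ¬ IsCyclicColoring twoK2K1 c := by
  intro hc
  have h₀₁ : c 0 ≠ c 1 := hc.ne_of_adj (by simp [twoK2K1])
  have h₂₃ : c 2 ≠ c 3 := hc.ne_of_adj (by simp [twoK2K1])
  have h₀₂₄ : c 0 = c 2 ∨ c 2 = c 4 ∨ c 0 = c 4 := by
    apply hc.not_rainbow <;> simp [twoK2K1]
  have h₀₃₄ : c 0 = c 3 ∨ c 3 = c 4 ∨ c 0 = c 4 := by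
    apply hc.not_rainbow <;> simp [twoK2K1]
  have h₁₂₄ : c 1 = c 2 ∨ c 2 = c 4 ∨ c 1 = c 4 := by
    apply hc.not_rainbow <;> simp [twoK2K1]
  have h₁₃₄ : c 1 = c 3 ∨ c 3 = c 4 ∨ c 1 = c 4 := by
    apply hc.not_rainbow <;> simp [twoK2K1]
  have h₀₂ : c 0 = c 2 → c 1 ≠ c 3 := by apply hc.not_bichromatic <;> simp [twoK2K1]
  have h₀₃ : c 0 = c 3 → c 1 ≠ c 2 := by apply hc.not_bichromatic <;> simp [twoK2K1]
  clear hc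
  grind

theorem not_isCyclicColoring_C5K1 (c : Fin 6 → Fin 3) : ¬ IsCyclicColoring C5K1 c := by
  intro hc
  have h₀₁ : c 0 ≠ c 1 := hc.ne_of_adj (by simp [C5K1])
  have h₁₂ : c 1 ≠ c 2 := hc.ne_of_adj (by simp [C5K1])
  have h₂₃ : c 2 ≠ c 3 := hc.ne_of_adj (by simp [C5K1])
  have h₃₄ : c 3 ≠ c 4 := hc.ne_of_adj (by simp [C5K1])
  have h₄₀ : c 4 ≠ c 0 := hc.ne_of_adj (by simp [C5K1])
  have h₀₂₅ : c 0 = c 2 ∨ c 2 = c 5 ∨ c 0 = c 5 := by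
    apply hc.not_rainbow <;> simp [C5K1]
  have h₁₃₅ : c 1 = c 3 ∨ c 3 = c 5 ∨ c 1 = c 5 := by
    apply hc.not_rainbow <;> simp [C5K1]
  have h₂₄₅ : c 2 = c 4 ∨ c 4 = c 5 ∨ c 2 = c 5 := by
    apply hc.not_rainbow <;> simp [C5K1]
  have h₃₀₅ : c 3 = c 0 ∨ c 0 = c 5 ∨ c 3 = c 5 := by
    apply hc.not_rainbow <;> simp [C5K1]
  have h₄₁₅ : c 4 = c 1 ∨ c 1 = c 5 ∨ c 4 = c 5 := by
    apply hc.not_rainbow <;> simp [C5K1]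
  clear hc
  grind

theorem not_isCyclicColoring_C6 (c : Fin 6 → Fin 3) : ¬ IsCyclicColoring C6 c := by
  intro hc
  have h₀₁ : c 0 ≠ c 1 := hc.ne_of_adj (by simp [C6])
  have h₁₂ : c 1 ≠ c 2 := hc.ne_of_adj (by simp [C6])
  have h₂₃ : c 2 ≠ c 3 := hc.ne_of_adj (by simp [C6])
  have h₃₄ : c 3 ≠ c 4 := hc.ne_of_adj (by simp [C6])
  have h₄₅ : c 4 ≠ c 5 := hc.ne_of_adj (by simp [C6])
  have h₅₀ : c 5 ≠ c 0 := hc.ne_of_adj (by simp [C6])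
  have h₀₂₄ : c 0 = c 2 ∨ c 2 = c 4 ∨ c 0 = c 4 := by apply hc.not_rainbow <;> simp [C6]
  have h₁₃₅ : c 1 = c 3 ∨ c 3 = c 5 ∨ c 1 = c 5 := by apply hc.not_rainbow <;> simp [C6]
  have h₀₄ : c 0 = c 4 → c 1 ≠ c 3 := by apply hc.not_bichromatic <;> simp [C6]
  have h₁₅ : c 1 = c 5 → c 2 ≠ c 4 := by apply hc.not_bichromatic <;> simp [C6]
  have h₂₀ : c 2 = c 0 → c 3 ≠ c 5 := by apply hc.not_bichromatic <;> simp [C6]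
  clear hc
  grind

end Obstructions

section ForbiddenSubgraphs

variable {V : Type*} {G : SimpleGraph V}

/-- The injectivity assumption says that no two vertices of `H` are twins. -/
theorem nonempty_embedding_of_adj_iff {W : Type*} {H : SimpleGraph W}
    (hH : Function.Injective H.Adj) (f : W → V) (hf : ∀ i j, G.Adj (f i) (f j) ↔ H.Adj i j) :
    Nonempty (H ↪g G) := by
  refine ⟨⟨⟨f, fun i j hij => hH ?_⟩, hf _ _⟩⟩
  ext k
  rw [← hf, ← hf, hij]

theorem not_adj_of_K3_free (h₃ : IsEmpty (K3 ↪g G)) {a b c : V} (hab : G.Adj a b)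
    (hbc : G.Adj b c) : ¬ G.Adj a c := by
  refine fun hac => not_nonempty_iff.2 h₃ (nonempty_embedding_of_adj_iff ?_ ![a, b, c] ?_)
  · simp [Function.Injective, Fin.forall_fin_succ, K3, funext_iff]
  · simp_all [Fin.forall_fin_succ, K3, G.adj_comm]

theorem adj_of_twoK2K1_free (h : IsEmpty (twoK2K1 ↪g G)) {p q r s t : V} (hpq : G.Adj p q)
    (hrs : G.Adj r s) (htp : ¬ G.Adj t p) (htq : ¬ G.Adj t q) (htr : ¬ G.Adj t r)
    (hts : ¬ G.Adj t s) : G.Adj p r ∨ G.Adj p s ∨ G.Adj q r ∨ G.Adj q s := by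
  by_contra! hcross
  refine not_nonempty_iff.2 h (nonempty_embedding_of_adj_iff ?_ ![p, q, r, s, t] ?_)
  · simp [Function.Injective, Fin.forall_fin_succ, twoK2K1, funext_iff]
  · simp_all [Fin.forall_fin_succ, twoK2K1, G.adj_comm]

theorem adj_of_C5K1_free (h₃ : IsEmpty (K3 ↪g G)) (h : IsEmpty (C5K1 ↪g G)) {a b c d e t : V}
    (hab : G.Adj a b) (hbc : G.Adj b c) (hcd : G.Adj c d) (hde : G.Adj d e) (hea : G.Adj e a) :
    G.Adj t a ∨ G.Adj t b ∨ G.Adj t c ∨ G.Adj t d ∨ G.Adj t e := by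
  by_contra! ht
  have hac := not_adj_of_K3_free h₃ hab hbc
  have hbd := not_adj_of_K3_free h₃ hbc hcd
  have hce := not_adj_of_K3_free h₃ hcd hde
  have hda := not_adj_of_K3_free h₃ hde hea
  have heb := not_adj_of_K3_free h₃ hea hab
  refine not_nonempty_iff.2 h (nonempty_embedding_of_adj_iff ?_ ![a, b, c, d, e, t] ?_)
  · simp [Function.Injective, Fin.forall_fin_succ, C5K1, funext_iff]
  · simp_all [Fin.forall_fin_succ, C5K1, G.adj_comm]

theorem adj_diagonal_of_C6_free (h₃ : IsEmpty (K3 ↪g G)) (h : IsEmpty (C6 ↪g G))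
    {a b c d e f : V} (hab : G.Adj a b) (hbc : G.Adj b c) (hcd : G.Adj c d) (hde : G.Adj d e)
    (hef : G.Adj e f) (hfa : G.Adj f a) : G.Adj a d ∨ G.Adj b e ∨ G.Adj c f := by
  by_contra! hdiag
  have hac := not_adj_of_K3_free h₃ hab hbc
  have hbd := not_adj_of_K3_free h₃ hbc hcd
  have hce := not_adj_of_K3_free h₃ hcd hde
  have hdf := not_adj_of_K3_free h₃ hde hef
  have hea := not_adj_of_K3_free h₃ hef hfa
  have hfb := not_adj_of_K3_free h₃ hfa hab
  refine not_nonempty_iff.2 h (nonempty_embedding_of_adj_iff ?_ ![a, b, c, d, e, f] ?_)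
  · simp [Function.Injective, Fin.forall_fin_succ, C6, funext_iff]
  · simp_all [Fin.forall_fin_succ, C6, G.adj_comm]

end ForbiddenSubgraphs

section Construction

variable {V : Type*} {G : SimpleGraph V} {v x : V}

open Classical in
/-- The colouring with the classes `N(v)`, `N(x) \ N(v)` and the rest, coloured `1`, `2` and `0`
respectively. -/
noncomputable def neighborColoring (G : SimpleGraph V) (v x u : V) : Fin 3 :=
  if G.Adj v u then 1 else if G.Adj x u then 2 else 0

theorem neighborColoring_eq_iff {u u' : V} :
    neighborColoring G v x u = neighborColoring G v x u' ↔
      (G.Adj v u ↔ G.Adj v u') ∧ (¬ G.Adj v u → (G.Adj x u ↔ G.Adj x u')) := by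
  grind [neighborColoring]

/-- The vertex `v` has an inclusion-minimal neighbourhood among all vertices. Then `N(v)` serves as
a colour class. -/
def HasMinimalNeighborSet (G : SimpleGraph V) (v : V) : Prop :=
  MinimalFor (fun _ => True) G.neighborSet v

/-- The vertex `x` has, among the non-neighbours of `v`, an inclusion-maximal set of neighbours
outside `N(v)`. Then `N(x) \ N(v)` serves as a colour class; it is empty if `x = v`, which is
allowed. -/
def HasMaximalNeighborSetOff (G : SimpleGraph V) (v x : V) : Prop :=
  MaximalFor (¬ G.Adj v ·) (fun u => G.neighborSet u \ G.neighborSet v) x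

theorem HasMinimalNeighborSet.exists_adj_not_adj (hv : HasMinimalNeighborSet G v)
    {u b : V} (hvb : G.Adj v b) (hub : ¬ G.Adj u b) : ∃ y, G.Adj u y ∧ ¬ G.Adj v y :=
  Set.not_subset.1 fun hsub => hub (hv.2 trivial hsub hvb)

theorem HasMaximalNeighborSetOff.exists_adj_not_adj (hx : HasMaximalNeighborSetOff G v x)
    {u w : V} (hvu : ¬ G.Adj v u) (hvw : ¬ G.Adj v w) (hxw : ¬ G.Adj x w) (huw : G.Adj u w) :
    ∃ y, G.Adj x y ∧ ¬ G.Adj v y ∧ ¬ G.Adj u y := by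
  by_contra! hsub
  exact hxw (hx.2 hvu (fun y hy => ⟨hsub y hy.1 hy.2, hy.2⟩) ⟨huw, hvw⟩).1

theorem exists_hasMinimalNeighborSet_hasMaximalNeighborSetOff [Finite V] [Nonempty V]
    (G : SimpleGraph V) :
    ∃ v x, HasMinimalNeighborSet G v ∧ HasMaximalNeighborSetOff G v x := by
  obtain ⟨v, hv⟩ := exists_minimalFor_of_wellFoundedLT (fun _ => True) G.neighborSet
    ⟨Classical.arbitrary V, trivial⟩
  obtain ⟨x, hx⟩ := exists_maximalFor_of_wellFoundedGT (¬ G.Adj v ·)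
    (fun u => G.neighborSet u \ G.neighborSet v) ⟨v, G.irrefl⟩
  exact ⟨v, x, hv, hx⟩

theorem HasMaximalNeighborSetOff.not_adj_of_not_adj (hx : HasMaximalNeighborSetOff G v x)
    (h₃ : IsEmpty (K3 ↪g G)) (h₂ : IsEmpty (twoK2K1 ↪g G)) (h₅ : IsEmpty (C5K1 ↪g G)) {u u' : V}
    (hvu : ¬ G.Adj v u) (hvu' : ¬ G.Adj v u') (hxu : ¬ G.Adj x u) (hxu' : ¬ G.Adj x u') :
    ¬ G.Adj u u' := by
  intro huu'
  obtain ⟨y, hxy, hvy, huy⟩ := hx.exists_adj_not_adj hvu hvu' hxu' huu'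
  obtain ⟨y', hxy', hvy', hu'y'⟩ := hx.exists_adj_not_adj hvu' hvu hxu huu'.symm
  have hyu' : G.Adj y u' := by
    grind [adj_of_twoK2K1_free h₂ hxy huu' hx.1 hvy hvu hvu', G.adj_comm y u]
  have huy' : G.Adj u y' := by
    grind [adj_of_twoK2K1_free h₂ hxy' huu' hx.1 hvy' hvu hvu', SimpleGraph.adj_comm]
  have hcycle : G.Adj v x ∨ G.Adj v y ∨ G.Adj v u' ∨ G.Adj v u ∨ G.Adj v y' :=
    adj_of_C5K1_free h₃ h₅ hxy hyu' huu'.symm huy' hxy'.symm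
  have hvx : ¬ G.Adj v x := hx.1
  tauto

theorem HasMaximalNeighborSetOff.adj_of_rainbow (hx : HasMaximalNeighborSetOff G v x)
    (h₃ : IsEmpty (K3 ↪g G)) (h₂ : IsEmpty (twoK2K1 ↪g G)) (h₅ : IsEmpty (C5K1 ↪g G))
    (hv : HasMinimalNeighborSet G v) {a b y : V} (hvb : G.Adj v b) (hvy : ¬ G.Adj v y)
    (hxy : G.Adj x y) (hva : ¬ G.Adj v a) (hxa : ¬ G.Adj x a) :
    G.Adj a b ∨ G.Adj a y ∨ G.Adj b y := by
  by_contra! ⟨hab, hay, hby⟩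
  have hxb : G.Adj x b := by
    have hvx : ¬ G.Adj v x := hx.1
    grind [adj_of_twoK2K1_free h₂ hvb hxy (mt .symm hva) hab (mt .symm hxa) hay, G.adj_comm x b]
  obtain ⟨y', hay', hvy'⟩ := hv.exists_adj_not_adj hvb hab
  have hxy' : G.Adj x y' := by
    by_contra hxy'
    exact hx.not_adj_of_not_adj h₃ h₂ h₅ hva hvy' hxa hxy' hay'
  have hby' : ¬ G.Adj b y' := not_adj_of_K3_free h₃ hxb.symm hxy'
  have hyy' : ¬ G.Adj y y' := not_adj_of_K3_free h₃ hxy.symm hxy'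
  have hcross : G.Adj v a ∨ G.Adj v y' ∨ G.Adj b a ∨ G.Adj b y' :=
    adj_of_twoK2K1_free h₂ hvb hay' (mt .symm hvy) (mt .symm hby) (mt .symm hay) hyy'
  grind [SimpleGraph.adj_comm]

theorem HasMaximalNeighborSetOff.exists_common_neighbor (hx : HasMaximalNeighborSetOff G v x)
    (h₃ : IsEmpty (K3 ↪g G)) (h₂ : IsEmpty (twoK2K1 ↪g G)) (h₅ : IsEmpty (C5K1 ↪g G))
    (hv : HasMinimalNeighborSet G v) {a a' b b' : V} (hva : ¬ G.Adj v a) (hva' : ¬ G.Adj v a')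
    (hxa : G.Adj x a ↔ G.Adj x a') (hvb : G.Adj v b) (hvb' : G.Adj v b')
    (hab' : ¬ G.Adj a b') (ha'b : ¬ G.Adj a' b) :
    ∃ z, ¬ G.Adj v z ∧ G.Adj z a ∧ G.Adj z a' := by
  by_cases h : G.Adj x a
  · exact ⟨x, hx.1, h, hxa.1 h⟩
  have adj_x {u y : V} (hvu : ¬ G.Adj v u) (hxu : ¬ G.Adj x u) (hvy : ¬ G.Adj v y)
      (huy : G.Adj u y) : G.Adj x y := by
    by_contra hxy
    exact hx.not_adj_of_not_adj h₃ h₂ h₅ hvu hvy hxu hxy huy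
  obtain ⟨y, hay, hvy⟩ := hv.exists_adj_not_adj hvb' hab'
  obtain ⟨y', hay', hvy'⟩ := hv.exists_adj_not_adj hvb ha'b
  have hxy : G.Adj x y := adj_x hva h hvy hay
  have hxy' : G.Adj x y' := adj_x hva' (mt hxa.2 h) hvy' hay'
  have hyy' : ¬ G.Adj y y' := not_adj_of_K3_free h₃ hxy.symm hxy'
  have haa' : ¬ G.Adj a a' := hx.not_adj_of_not_adj h₃ h₂ h₅ hva hva' h (mt hxa.2 h)
  have hcross : G.Adj a a' ∨ G.Adj a y' ∨ G.Adj y a' ∨ G.Adj y y' :=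
    adj_of_twoK2K1_free h₂ hay hay' hva hvy hva' hvy'
  grind [SimpleGraph.adj_comm]

theorem HasMaximalNeighborSetOff.adj_of_bichromatic (hx : HasMaximalNeighborSetOff G v x)
    (h₃ : IsEmpty (K3 ↪g G)) (h₂ : IsEmpty (twoK2K1 ↪g G)) (h₅ : IsEmpty (C5K1 ↪g G))
    (h₆ : IsEmpty (C6 ↪g G)) (hv : HasMinimalNeighborSet G v) {a a' b b' : V}
    (hva : ¬ G.Adj v a) (hva' : ¬ G.Adj v a') (hxa : G.Adj x a ↔ G.Adj x a') (hvb : G.Adj v b)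
    (hvb' : G.Adj v b') (hab : G.Adj a b) (ha'b' : G.Adj a' b') :
    G.Adj a b' ∨ G.Adj a' b := by
  by_contra! ⟨hab', ha'b⟩
  obtain ⟨z, hvz, hza, hza'⟩ :=
    hx.exists_common_neighbor h₃ h₂ h₅ hv hva hva' hxa hvb hvb' hab' ha'b
  have hdiag : G.Adj z v ∨ G.Adj a b' ∨ G.Adj b a' :=
    adj_diagonal_of_C6_free h₃ h₆ hza hab hvb.symm hvb' ha'b'.symm hza'.symm
  grind [SimpleGraph.adj_comm]

theorem HasMaximalNeighborSetOff.neighborColoring_ne_of_adj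
    (hx : HasMaximalNeighborSetOff G v x) (h₃ : IsEmpty (K3 ↪g G)) (h₂ : IsEmpty (twoK2K1 ↪g G))
    (h₅ : IsEmpty (C5K1 ↪g G)) {u w : V} (huw : G.Adj u w) :
    neighborColoring G v x u ≠ neighborColoring G v x w := by
  intro hcolor
  obtain ⟨hv, hx'⟩ := neighborColoring_eq_iff.1 hcolor
  by_cases hvu : G.Adj v u
  · exact not_adj_of_K3_free h₃ hvu huw (hv.1 hvu)
  by_cases hxu : G.Adj x u
  · exact not_adj_of_K3_free h₃ hxu huw ((hx' hvu).1 hxu)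
  · exact hx.not_adj_of_not_adj h₃ h₂ h₅ hvu (mt hv.2 hvu) hxu (mt (hx' hvu).2 hxu) huw

theorem HasMaximalNeighborSetOff.isCyclicColoring (hx : HasMaximalNeighborSetOff G v x)
    (h₃ : IsEmpty (K3 ↪g G)) (h₂ : IsEmpty (twoK2K1 ↪g G)) (h₅ : IsEmpty (C5K1 ↪g G))
    (h₆ : IsEmpty (C6 ↪g G)) (hv : HasMinimalNeighborSet G v) :
    IsCyclicColoring G (neighborColoring G v x) where
  ne_of_adj := hx.neighborColoring_ne_of_adj h₃ h₂ h₅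
  not_adj_of_adj_of_adj := not_adj_of_K3_free h₃
  not_rainbow {u w t} huw hwt hut := by
    have hrainbow (a b y : V) := hx.adj_of_rainbow h₃ h₂ h₅ hv (a := a) (b := b) (y := y)
    simp only [neighborColoring_eq_iff]
    grind [SimpleGraph.adj_comm]
  not_bichromatic {u w u' w'} huw hu'w' huw' hu'w hu hw := by
    have huu' : ¬ G.Adj u u' := fun h => hx.neighborColoring_ne_of_adj h₃ h₂ h₅ h hu
    have hww' : ¬ G.Adj w w' := fun h => hx.neighborColoring_ne_of_adj h₃ h₂ h₅ h hw
    obtain ⟨hvu', hxu'⟩ := neighborColoring_eq_iff.1 hu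
    obtain ⟨hvw', hxw'⟩ := neighborColoring_eq_iff.1 hw
    by_cases hvu : G.Adj v u
    · have hvw : ¬ G.Adj v w := not_adj_of_K3_free h₃ hvu huw
      have hcross : G.Adj w u' ∨ G.Adj w' u :=
        hx.adj_of_bichromatic h₃ h₂ h₅ h₆ hv hvw (mt hvw'.2 hvw) (hxw' hvw) hvu (hvu'.1 hvu)
          huw.symm hu'w'.symm
      grind [SimpleGraph.adj_comm]
    by_cases hvw : G.Adj v w
    · have hcross : G.Adj u w' ∨ G.Adj u' w :=
        hx.adj_of_bichromatic h₃ h₂ h₅ h₆ hv hvu (mt hvu'.2 hvu) (hxu' hvu) hvw (hvw'.1 hvw)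
          huw hu'w'
      tauto
    · have hcross : G.Adj u u' ∨ G.Adj u w' ∨ G.Adj w u' ∨ G.Adj w w' :=
        adj_of_twoK2K1_free h₂ huw hu'w' hvu hvw (mt hvu'.2 hvu) (mt hvw'.2 hvw)
      grind [SimpleGraph.adj_comm]

theorem exists_isCyclicColoring [Finite V] (h₃ : IsEmpty (K3 ↪g G))
    (h₂ : IsEmpty (twoK2K1 ↪g G)) (h₅ : IsEmpty (C5K1 ↪g G)) (h₆ : IsEmpty (C6 ↪g G)) :
    ∃ c, IsCyclicColoring G c := by
  cases isEmpty_or_nonempty V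
  · exact ⟨isEmptyElim, by constructor <;> exact fun {u} => isEmptyElim u⟩
  · obtain ⟨v, x, hv, hx⟩ := exists_hasMinimalNeighborSet_hasMaximalNeighborSetOff G
    exact ⟨neighborColoring G v x, hx.isCyclicColoring h₃ h₂ h₅ h₆ hv⟩

end Construction

/-- A graph is a 3-letter graph with the decoder `{(a,b),(b,c),(c,a)}` iff it is
`(K₃, 2K₂ + K₁, C₅ + K₁, C₆)`-free. -/
theorem cyclic3Letter_iff_forbidden {V : Type} [Fintype V] (G : SimpleGraph V) :
    IsCyclic3Letter G ↔
      IsEmpty (K3 ↪g G) ∧ IsEmpty (twoK2K1 ↪g G) ∧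
      IsEmpty (C5K1 ↪g G) ∧ IsEmpty (C6 ↪g G) := by
  constructor
  · intro h
    obtain ⟨c, hc⟩ := h.exists_isCyclicColoring
    exact ⟨⟨fun f => not_isCyclicColoring_K3 _ (hc.comap f)⟩,
      ⟨fun f => not_isCyclicColoring_twoK2K1 _ (hc.comap f)⟩,
      ⟨fun f => not_isCyclicColoring_C5K1 _ (hc.comap f)⟩,
      ⟨fun f => not_isCyclicColoring_C6 _ (hc.comap f)⟩⟩
  · rintro ⟨h₃, h₂, h₅, h₆⟩
    obtain ⟨c, hc⟩ := exists_isCyclicColoring h₃ h₂ h₅ h₆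
    exact hc.isCyclic3Letter
end

section
/- If a graph G contains no induced subgraph isomorphic to K₃, 2K₂, or C₅ + K₁, and G contains an induced chordless 5-cycle, then the vertex set of G can be partitioned into five independent sets V₁,…,V₅ (indices mod 5) such that every vertex of V_i is adjacent to every vertex of V_{i+1} and non-adjacent to every vertex of V_{i+2}; in particular G is nice (for instance with the partition (V₁ ∪ V₄), (V₂ ∪ V₅), V₃) and hence a 3-letter graph with the decoder {(a,b),(b,c),(c,a)}. -/
/-- The chordless 5-cycle `C₅`. -/
def C5 : SimpleGraph (Fin 5) :=
  SimpleGraph.fromEdgeSet {s(0,1), s(1,2), s(2,3), s(3,4), s(4,0)}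

/-!
Let `f` be an induced 5-cycle in `G`. The neighbours of a vertex `v` on this cycle form an
independent set because `G` is triangle-free; the set is nonempty because `G` is `(C₅ + K₁)`-free;
and if it contains `j` then it also meets the edge opposite to `j`, as otherwise that edge and
`v f(j)` would form a `2K₂`. Hence it consists of the two cycle-neighbours of a unique `i`, and `v`
is a copy of `f(i)`. Two non-adjacent vertices of `C₅` have a common neighbour, so triangle-freeness
forbids edges between their classes; an edge of `C₅` is the middle edge of an induced path on four
vertices, so `2K₂`-freeness forces all edges between the classes of its ends. So `G` is the
pullback of `C₅` along the class map `k`.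

Niceness and the word are inherited from `C₅`. A nice triple of `C₅` pulls back along `k` because
`2K₂` has no twins: an induced copy of it in a blow-up meets every class at most once, so it
projects to an induced copy in `C₅`. The word `abcab` encodes `C₅`, and a letter is never adjacent
to itself, so listing the vertices of `G` in order of their class gives a word for `G`.
-/

theorem eq_of_adj_iff_of_lt {V : Type*} [LinearOrder V] {G G' : SimpleGraph V}
    (h : ∀ i j, i < j → (G.Adj i j ↔ G'.Adj i j)) : G = G' := by
  ext i j
  rcases lt_trichotomy i j with hij | rfl | hij
  · exact h i j hij
  · simp only [SimpleGraph.irrefl]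
  · rw [G.adj_comm, G'.adj_comm, h j i hij]

/-- A graph without false twins: distinct vertices have distinct neighbourhoods. Any map along which
`G` pulls back to such a graph is injective, hence an induced embedding into `G`. -/
def TwinFree {W : Type*} (H : SimpleGraph W) : Prop :=
  ∀ i j, (∀ l, H.Adj i l ↔ H.Adj j l) → i = j

section Comap

variable {V W X : Type*} {F : SimpleGraph X} {G : SimpleGraph V} {H : SimpleGraph W}

theorem TwinFree.nonempty_embedding (hH : TwinFree H) {φ : W → V} (hφ : H = G.comap φ) :
    Nonempty (H ↪g G) := by
  subst hφ
  have hinj : Function.Injective φ := fun i j hij => hH i j fun l => by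
    simp only [SimpleGraph.comap_adj, hij]
  exact ⟨SimpleGraph.Embedding.comap ⟨φ, hinj⟩ G⟩

theorem TwinFree.isEmpty_embedding_comap (hF : TwinFree F) (h : IsEmpty (F ↪g H)) (k : V → W) :
    IsEmpty (F ↪g H.comap k) := by
  refine ⟨fun g => not_isEmpty_iff.2 ?_ h⟩
  exact hF.nonempty_embedding (φ := k ∘ g) g.comap_eq.symm

theorem isEmpty_embedding_induce (h : IsEmpty (F ↪g G)) (s : Set V) :
    IsEmpty (F ↪g G.induce s) :=
  ⟨fun g => h.false ((SimpleGraph.Embedding.induce s).comp g)⟩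

end Comap

section LetterGraph

variable {V W S : Type*}

theorem letterGraph_adj_of_lt {n : ℕ} {P : S → S → Prop} {w : Fin n → S} {i j : Fin n}
    (hij : i < j) : (letterGraph P w).Adj i j ↔ P (w i) (w j) := by
  simp only [letterGraph, hij, hij.asymm, true_and, false_and, or_false]

theorem exists_equiv_fin_monotone [Finite V] [LinearOrder W] (k : V → W) :
    ∃ (n : ℕ) (e : Fin n ≃ V), Monotone (k ∘ e) := by
  obtain ⟨n, ⟨e⟩⟩ := Finite.exists_equiv_fin V
  exact ⟨n, (Tuple.sort (k ∘ e.symm)).trans e.symm, Tuple.monotone_sort (k ∘ e.symm)⟩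

theorem exists_iso_comap_letterGraph [Finite V] [LinearOrder W] {H : SimpleGraph W}
    {P : S → S → Prop} {letter : W → S}
    (hP : ∀ i j, i ≤ j → (P (letter i) (letter j) ↔ H.Adj i j)) (k : V → W) :
    ∃ (n : ℕ) (w : Fin n → S), Nonempty (H.comap k ≃g letterGraph P w) := by
  obtain ⟨n, e, he⟩ := exists_equiv_fin_monotone k
  have hw : (H.comap k).comap e = letterGraph P (letter ∘ k ∘ e) :=
    eq_of_adj_iff_of_lt fun i j hij =>
      ((letterGraph_adj_of_lt hij).trans (hP _ _ (he hij.le))).symm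
  exact ⟨n, letter ∘ k ∘ e, ⟨hw ▸ (SimpleGraph.Iso.comap e (H.comap k)).symm⟩⟩

end LetterGraph

section ForbiddenSubgraphs

instance : DecidableRel C5.Adj :=
  inferInstanceAs (DecidableRel (SimpleGraph.fromEdgeSet _).Adj)

instance : DecidableRel C5K1.Adj :=
  inferInstanceAs (DecidableRel (SimpleGraph.fromEdgeSet _).Adj)

instance : DecidableRel twoK2.Adj :=
  inferInstanceAs (DecidableRel (SimpleGraph.fromEdgeSet _).Adj)

theorem twinFree_twoK2 : TwinFree twoK2 := by
  unfold TwinFree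
  decide

theorem twinFree_C5K1 : TwinFree C5K1 := by
  unfold TwinFree
  decide

theorem C5K1_adj_castSucc {i j : Fin 5} : C5K1.Adj i.castSucc j.castSucc ↔ C5.Adj i j := by
  revert i j
  decide

theorem not_C5K1_adj_last (i : Fin 5) : ¬ C5K1.Adj i.castSucc (Fin.last 5) := by
  revert i
  decide

variable {V : Type*} {G : SimpleGraph V}

theorem cliqueFree_three_of_isEmpty_K3 (h : IsEmpty (K3 ↪g G)) : G.CliqueFree 3 := by
  by_contra hG
  exact h.false (SimpleGraph.topEmbeddingOfNotCliqueFree hG)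

theorem exists_adj_of_isEmpty_twoK2 (h : IsEmpty (twoK2 ↪g G)) {a b c d : V}
    (hab : G.Adj a b) (hcd : G.Adj c d) :
    G.Adj a c ∨ G.Adj a d ∨ G.Adj b c ∨ G.Adj b d := by
  by_contra! hn
  obtain ⟨hac, had, hbc, hbd⟩ := hn
  have hcomap : twoK2 = G.comap ![a, b, c, d] := eq_of_adj_iff_of_lt fun i j hij => by
    fin_cases i <;> fin_cases j <;> simp_all [twoK2]
  exact not_isEmpty_iff.2 (twinFree_twoK2.nonempty_embedding hcomap) h

theorem exists_adj_of_isEmpty_C5K1 (h : IsEmpty (C5K1 ↪g G)) (f : C5 ↪g G) (v : V) :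
    ∃ i, G.Adj v (f i) := by
  by_contra! hv
  have hcomap : C5K1 = G.comap (Fin.snoc (α := fun _ => V) f v) :=
    eq_of_adj_iff_of_lt fun i j hij => by
      obtain ⟨i, rfl⟩ := Fin.exists_castSucc_eq.2 (Fin.ne_last_of_lt hij)
      induction j using Fin.lastCases with
      | last =>
        simp only [SimpleGraph.comap_adj, Fin.snoc_castSucc, Fin.snoc_last, not_C5K1_adj_last,
          G.adj_comm, hv]
      | cast j =>
        simp only [SimpleGraph.comap_adj, Fin.snoc_castSucc, C5K1_adj_castSucc, f.map_adj_iff]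
  exact not_isEmpty_iff.2 (twinFree_C5K1.nonempty_embedding hcomap) h

end ForbiddenSubgraphs

section FiveCycle

theorem exists_common_neighbor_of_not_C5_adj {i j : Fin 5} (h : ¬ C5.Adj i j) :
    ∃ l, C5.Adj i l ∧ C5.Adj j l := by
  revert i j
  decide

theorem exists_induced_path_of_C5_adj {i j : Fin 5} (h : C5.Adj i j) :
    ∃ a b, C5.Adj i a ∧ C5.Adj j b ∧ ¬ C5.Adj i b ∧ ¬ C5.Adj j a ∧ ¬ C5.Adj a b := by
  revert i j
  decide

theorem isEmpty_twoK2_embedding_C5 : IsEmpty (twoK2 ↪g C5) := by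
  have h : ∀ a b c d, C5.Adj a b → C5.Adj c d →
      C5.Adj a c ∨ C5.Adj a d ∨ C5.Adj b c ∨ C5.Adj b d := by
    decide
  refine ⟨fun g => ?_⟩
  have hg := h (g 0) (g 1) (g 2) (g 3)
  simp only [g.map_adj_iff] at hg
  revert hg
  decide

theorem eq_neighborSet_C5_of_mem {S : Set (Fin 5)} (hS : C5.IsIndepSet S) {a : Fin 5}
    (ha : a ∈ S) (ha' : a + 2 ∈ S) : S = C5.neighborSet (a + 1) := by
  have hsub : ∀ a j, ¬ C5.Adj a j → ¬ C5.Adj (a + 2) j → C5.Adj (a + 1) j := by decide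
  have hsup : ∀ a j, C5.Adj (a + 1) j → j = a ∨ j = a + 2 := by decide
  have hnadj {i j : Fin 5} (hi : i ∈ S) (hj : j ∈ S) : ¬ C5.Adj i j :=
    fun hij => hS hi hj hij.ne hij
  ext j
  constructor
  · intro hj
    exact hsub a j (hnadj ha hj) (hnadj ha' hj)
  · intro hj
    rcases hsup a j hj with rfl | rfl
    exacts [ha, ha']

theorem exists_eq_neighborSet_C5 {S : Set (Fin 5)} (hne : S.Nonempty) (hindep : C5.IsIndepSet S)
    (hedge : ∀ j ∈ S, ∀ l m, C5.Adj l m → ¬ C5.Adj j l → ¬ C5.Adj j m → l ∈ S ∨ m ∈ S) :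
    ∃ i, S = C5.neighborSet i := by
  obtain ⟨j, hj⟩ := hne
  have hopposite : ∀ j, C5.Adj (j + 2) (j + 3) ∧ ¬ C5.Adj j (j + 2) ∧ ¬ C5.Adj j (j + 3) := by
    decide
  obtain ⟨hadj, hn₂, hn₃⟩ := hopposite j
  rcases hedge j hj _ _ hadj hn₂ hn₃ with h₂ | h₃
  · exact ⟨_, eq_neighborSet_C5_of_mem hindep hj h₂⟩
  · have hj' : j + 3 + 2 ∈ S := by
      rwa [add_assoc, show (3 + 2 : Fin 5) = 0 from rfl, add_zero]
    exact ⟨_, eq_neighborSet_C5_of_mem hindep h₃ hj'⟩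

end FiveCycle

section BlowUp

variable {V : Type*} {G : SimpleGraph V}

theorem exists_neighborSet_C5_eq_preimage (hK3 : G.CliqueFree 3) (h2K2 : IsEmpty (twoK2 ↪g G))
    (hC5K1 : IsEmpty (C5K1 ↪g G)) (f : C5 ↪g G) (v : V) :
    ∃ i, f ⁻¹' G.neighborSet v = C5.neighborSet i := by
  refine exists_eq_neighborSet_C5 (exists_adj_of_isEmpty_C5K1 hC5K1 f v) ?_ ?_
  · intro i hi j hj _ hij
    have hij' : G.Adj (f i) (f j) := f.map_adj_iff.2 hij
    exact G.isIndepSet_neighborSet_of_triangleFree hK3 v hi hj hij'.ne hij'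
  · intro j hj l m hlm hjl hjm
    rcases exists_adj_of_isEmpty_twoK2 h2K2 hj (f.map_adj_iff.2 hlm) with h | h | h | h
    · exact Or.inl h
    · exact Or.inr h
    · exact absurd (f.map_adj_iff.1 h) hjl
    · exact absurd (f.map_adj_iff.1 h) hjm

theorem exists_eq_comap_C5 (hK3 : G.CliqueFree 3) (h2K2 : IsEmpty (twoK2 ↪g G))
    (hC5K1 : IsEmpty (C5K1 ↪g G)) (f : C5 ↪g G) : ∃ k : V → Fin 5, G = C5.comap k := by
  choose k hk using exists_neighborSet_C5_eq_preimage hK3 h2K2 hC5K1 f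
  have hadj (v : V) (j : Fin 5) : G.Adj v (f j) ↔ C5.Adj (k v) j := Set.ext_iff.1 (hk v) j
  refine ⟨k, ?_⟩
  ext x y
  rw [SimpleGraph.comap_adj]
  constructor
  · intro hxy
    by_contra hn
    obtain ⟨l, hxl, hyl⟩ := exists_common_neighbor_of_not_C5_adj hn
    exact G.isIndepSet_neighborSet_of_triangleFree hK3 (f l) ((hadj x l).2 hxl).symm
      ((hadj y l).2 hyl).symm hxy.ne hxy
  · intro hxy
    obtain ⟨a, b, hxa, hyb, hxb, hya, hab⟩ := exists_induced_path_of_C5_adj hxy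
    rcases exists_adj_of_isEmpty_twoK2 h2K2 ((hadj x a).2 hxa) ((hadj y b).2 hyb)
      with h | h | h | h
    · exact h
    · exact absurd ((hadj x b).1 h) hxb
    · exact absurd ((hadj y a).1 h.symm) hya
    · exact absurd (f.map_adj_iff.1 h) hab

end BlowUp

section Nice

variable {V W : Type} {H : SimpleGraph W}

theorem IsIndepSetOn.comap {s : Set W} (hs : IsIndepSetOn H s) (k : V → W) :
    IsIndepSetOn (H.comap k) (k ⁻¹' s) :=
  fun _ hx _ hy _ hadj => hs hx hy (SimpleGraph.Adj.ne hadj) hadj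

theorem NiceTriple.comap {A B C : Set W} (h : NiceTriple H A B C) (k : V → W) :
    NiceTriple (H.comap k) (k ⁻¹' A) (k ⁻¹' B) (k ⁻¹' C) := by
  obtain ⟨hAB, hAC, hBC, hA, hB, hC, hAB', hBC', hCA', htriple⟩ := h
  have htwoK2 {s : Set W} (hs : IsEmpty (twoK2 ↪g H.induce s)) :
      IsEmpty (twoK2 ↪g (H.comap k).induce (k ⁻¹' s)) :=
    twinFree_twoK2.isEmpty_embedding_comap hs (s.restrictPreimage k)
  exact ⟨hAB.preimage k, hAC.preimage k, hBC.preimage k, hA.comap k, hB.comap k, hC.comap k,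
    htwoK2 hAB', htwoK2 hBC', htwoK2 hCA',
    fun a ha b hb c hc => htriple (k a) ha (k b) hb (k c) hc⟩

theorem niceTriple_C5 : NiceTriple C5 {0, 3} {1, 4} {2} := by
  have htwoK2 := isEmpty_embedding_induce isEmpty_twoK2_embedding_C5
  refine ⟨?_, ?_, ?_, ?_, ?_, ?_, htwoK2 _, htwoK2 _, htwoK2 _, ?_⟩
  · simp
  · simp
  · simp
  · rintro i (rfl | rfl) j (rfl | rfl) _ <;> decide
  · rintro i (rfl | rfl) j (rfl | rfl) _ <;> decide
  · rintro i rfl j rfl _; decide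
  · rintro a (rfl | rfl) b (rfl | rfl) c rfl <;> decide

end Nice

/-- The letters `a = 0`, `b = 1`, `c = 2` given to the five classes of a blow-up of `C₅` by the
partition `(V₀ ∪ V₃), (V₁ ∪ V₄), V₂`. -/
def letterC5 : Fin 5 → Fin 3 := ![0, 1, 2, 0, 1]

instance : DecidableRel cyclicDecoder := fun x y =>
  inferInstanceAs (Decidable ((x = 0 ∧ y = 1) ∨ (x = 1 ∧ y = 2) ∨ (x = 2 ∧ y = 0)))

theorem cyclicDecoder_letterC5_iff :
    ∀ i j : Fin 5, i ≤ j → (cyclicDecoder (letterC5 i) (letterC5 j) ↔ C5.Adj i j) := by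
  decide

/-- If `G` is `(K₃, 2K₂, C₅ + K₁)`-free and contains an induced `C₅`, then `V(G)` is
partitioned into five independent sets `V₀,…,V₄` (indices mod 5) with `Vᵢ` complete to
`Vᵢ₊₁` and anticomplete to `Vᵢ₊₂`; in particular `G` is nice (e.g. with the partition
`(V₀ ∪ V₃), (V₁ ∪ V₄), V₂`) and hence a 3-letter graph with decoder
`{(a,b),(b,c),(c,a)}`. -/
theorem blowup_C5_structure {V : Type} [Fintype V] (G : SimpleGraph V)
    (hK3 : IsEmpty (K3 ↪g G)) (h2K2 : IsEmpty (twoK2 ↪g G))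
    (hC5K1 : IsEmpty (C5K1 ↪g G)) (hC5 : Nonempty (C5 ↪g G)) :
    (∃ P : ZMod 5 → Set V,
      (∀ v : V, ∃! i : ZMod 5, v ∈ P i) ∧
      (∀ i : ZMod 5, IsIndepSetOn G (P i)) ∧
      (∀ i : ZMod 5, ∀ x ∈ P i, ∀ y ∈ P (i + 1), G.Adj x y) ∧
      (∀ i : ZMod 5, ∀ x ∈ P i, ∀ y ∈ P (i + 2), ¬ G.Adj x y) ∧
      (P 0 ∪ P 3) ∪ (P 1 ∪ P 4) ∪ P 2 = Set.univ ∧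
      NiceTriple G (P 0 ∪ P 3) (P 1 ∪ P 4) (P 2)) ∧
    IsCyclic3Letter G := by
  obtain ⟨f⟩ := hC5
  obtain ⟨k, rfl⟩ := exists_eq_comap_C5 (cliqueFree_three_of_isEmpty_K3 hK3) h2K2 hC5K1 f
  have hadj : ∀ i : Fin 5, C5.Adj i (i + 1) := by decide
  have hnadj : ∀ i : Fin 5, ¬ C5.Adj i (i + 2) := by decide
  refine ⟨⟨fun i => k ⁻¹' {i}, ?_, ?_, ?_, ?_, ?_, niceTriple_C5.comap k⟩,
    exists_iso_comap_letterGraph cyclicDecoder_letterC5_iff k⟩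
  · exact fun v => ⟨k v, rfl, fun _ hi => hi.symm⟩
  · exact fun i => IsIndepSetOn.comap (Set.pairwise_singleton i _) k
  · rintro _ x rfl y (hy : k y = k x + 1)
    exact SimpleGraph.comap_adj.2 (hy ▸ hadj (k x))
  · rintro _ x rfl y (hy : k y = k x + 2)
    exact fun h => hnadj (k x) (hy ▸ h)
  · have hcover : ({0, 3} ∪ {1, 4} ∪ {2} : Set (Fin 5)) = Set.univ := by
      ext i
      fin_cases i <;> simp
    exact congrArg (k ⁻¹' ·) hcover
end

section
/- Every permutation that avoids the patterns 321, 2143 and 3142 has at most one descent, i.e., there is at most one index i such that π(i) > π(i+1). -/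
/-- `π` contains the pattern `ρ`: there are positions `i₁ < ⋯ < i_k` on which the
values of `π` are in the same relative order as `ρ`. -/
def ContainsPattern {n k : ℕ} (π : Equiv.Perm (Fin n)) (ρ : Equiv.Perm (Fin k)) :
    Prop :=
  ∃ f : Fin k → Fin n, StrictMono f ∧ ∀ s t : Fin k, ρ s < ρ t ↔ π (f s) < π (f t)

/-- The pattern `321`. -/
def p321 : Equiv.Perm (Fin 3) := ⟨![2, 1, 0], ![2, 1, 0], by decide, by decide⟩

/-- The pattern `2143`. -/
def p2143 : Equiv.Perm (Fin 4) := ⟨![1, 0, 3, 2], ![1, 0, 3, 2], by decide, by decide⟩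

/-- The pattern `3142`. -/
def p3142 : Equiv.Perm (Fin 4) := ⟨![2, 0, 3, 1], ![1, 3, 0, 2], by decide, by decide⟩

/-- The pattern `2413`. -/
def p2413 : Equiv.Perm (Fin 4) := ⟨![1, 3, 0, 2], ![2, 0, 3, 1], by decide, by decide⟩

/-!
A descent is an inversion of adjacent positions, so it is enough that no inversion ends at or before
the start of another. If one ends where the other starts, they form a `321`. Otherwise their
positions are `a < b < c < d` with `π b < π a` and `π d < π c`. Avoiding `321` forces `π a < π c`
and `π b < π d`, so only `π a` and `π d` remain to be compared, and the two outcomes are `2143`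
and `3142`.
-/

section

variable {n k : ℕ} {π : Equiv.Perm (Fin n)} {a b c d : Fin n}

theorem containsPattern_of_strictMono {ρ : Equiv.Perm (Fin k)} {f : Fin k → Fin n}
    (hf : StrictMono f) (hρ : StrictMono (π ∘ f ∘ ρ.symm)) : ContainsPattern π ρ := by
  refine ⟨f, hf, fun s t => ?_⟩
  simpa using (hρ.lt_iff_lt (a := ρ s) (b := ρ t)).symm

theorem containsPattern_p321 (hab : a < b) (hbc : b < c) (hcb : π c < π b) (hba : π b < π a) :
    ContainsPattern π p321 :=
  containsPattern_of_strictMono (f := ![a, b, c])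
    (by simp [Fin.strictMono_iff_lt_succ, Fin.forall_fin_succ, hab, hbc])
    (by simp [Fin.strictMono_iff_lt_succ, Fin.forall_fin_succ, p321, hcb, hba])

theorem containsPattern_p2143 (hab : a < b) (hbc : b < c) (hcd : c < d)
    (hba : π b < π a) (had : π a < π d) (hdc : π d < π c) : ContainsPattern π p2143 :=
  containsPattern_of_strictMono (f := ![a, b, c, d])
    (by simp [Fin.strictMono_iff_lt_succ, Fin.forall_fin_succ, hab, hbc, hcd])
    (by simp [Fin.strictMono_iff_lt_succ, Fin.forall_fin_succ, p2143, hba, had, hdc])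

theorem containsPattern_p3142 (hab : a < b) (hbc : b < c) (hcd : c < d)
    (hbd : π b < π d) (hda : π d < π a) (hac : π a < π c) : ContainsPattern π p3142 :=
  containsPattern_of_strictMono (f := ![a, b, c, d])
    (by simp [Fin.strictMono_iff_lt_succ, Fin.forall_fin_succ, hab, hbc, hcd])
    (by simp [Fin.strictMono_iff_lt_succ, Fin.forall_fin_succ, p3142, hbd, hda, hac])

theorem avoid_321_2143_3142_at_most_one_descent_general
    (h321 : ¬ ContainsPattern π p321) (h2143 : ¬ ContainsPattern π p2143)
    (h3142 : ¬ ContainsPattern π p3142)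
    (hab : a < b) (hba : π b < π a) (hcd : c < d) (hdc : π d < π c) : c < b := by
  by_contra! hbc
  rcases hbc.eq_or_lt with rfl | hbc
  · exact h321 (containsPattern_p321 hab hcd hdc hba)
  have hac : a < c := hab.trans hbc
  have hbd : b < d := hbc.trans hcd
  have map_lt_of_not_gt {x y : Fin n} (hxy : x ≠ y) (h : ¬ π y < π x) : π x < π y :=
    (not_lt.1 h).lt_of_ne (π.injective.ne hxy)
  have hπac : π a < π c :=
    map_lt_of_not_gt hac.ne fun hca => h321 (containsPattern_p321 hac hcd hdc hca)
  have hπbd : π b < π d :=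
    map_lt_of_not_gt hbd.ne fun hdb => h321 (containsPattern_p321 hab hbd hdb hba)
  have hπda : π d < π a :=
    map_lt_of_not_gt (hac.trans hcd).ne' fun had =>
      h2143 (containsPattern_p2143 hab hbc hcd hba had hdc)
  exact h3142 (containsPattern_p3142 hab hbc hcd hπbd hπda hπac)

end

/-- Every permutation avoiding `321`, `2143` and `3142` has at most one descent. -/
theorem avoid_321_2143_3142_at_most_one_descent (n : ℕ) (π : Equiv.Perm (Fin n))
    (h321 : ¬ ContainsPattern π p321) (h2143 : ¬ ContainsPattern π p2143)
    (h3142 : ¬ ContainsPattern π p3142) :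
    ∀ (i j : ℕ) (hi : i + 1 < n) (hj : j + 1 < n),
      π ⟨i + 1, hi⟩ < π ⟨i, Nat.lt_of_succ_lt hi⟩ →
      π ⟨j + 1, hj⟩ < π ⟨j, Nat.lt_of_succ_lt hj⟩ → i = j := by
  intro i j hi hj descent_i descent_j
  have hji := avoid_321_2143_3142_at_most_one_descent_general h321 h2143 h3142
    (Fin.mk_lt_mk.2 i.lt_succ_self) descent_i (Fin.mk_lt_mk.2 j.lt_succ_self) descent_j
  have hij := avoid_321_2143_3142_at_most_one_descent_general h321 h2143 h3142
    (Fin.mk_lt_mk.2 j.lt_succ_self) descent_j (Fin.mk_lt_mk.2 i.lt_succ_self) descent_i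
  exact (Nat.le_of_lt_succ hij).antisymm (Nat.le_of_lt_succ hji)
end

section
/- Every permutation π of {1,…,n} that avoids the patterns 321, 2143 and 2413 is the union of two increasing subsequences such that every value of one subsequence is greater than every value of the other: there is a set S of positions such that π is increasing on S and on its complement, and every value π(i) with i ∈ S exceeds every value π(j) with j ∉ S. -/
/-! Call positions `i < j` with `f j < f i` an inversion with top `i` and bottom `j`, and let `S` be
the set of positions whose value is at least that of some top. Then `S` lies above its complement
by choice, and the complement contains no top, hence no inversion. An inversion inside `S` has a
bottom whose value is at least that of the top of another inversion. If these two positions agree,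
the inversions chain to a `321`. Otherwise both values of one inversion exceed both values of the
other, and every relative order of the four positions produces `321`, `2143` or `2413`. -/

section Preorder

variable {α β : Type*} [Preorder α] [Preorder β] {f : α → β}

/-- Containment of a pattern in a map between ordered types; for the map underlying a permutation
of `Fin n` it unfolds to `ContainsPattern`. -/
def MapContainsPattern {k : ℕ} (f : α → β) (ρ : Equiv.Perm (Fin k)) : Prop :=
  ∃ g : Fin k → α, StrictMono g ∧ ∀ s t : Fin k, ρ s < ρ t ↔ f (g s) < f (g t)

/-- An inversion of a map between ordered types, recorded by its two positions: the larger value,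
at `i`, comes first. -/
def IsInversion (f : α → β) (i j : α) : Prop :=
  i < j ∧ f j < f i

/-- The upper part of the decomposition: the positions whose value is at least the larger value of
some inversion. -/
def aboveInversions (f : α → β) : Set α :=
  {x | ∃ i j, IsInversion f i j ∧ f i ≤ f x}

theorem mapContainsPattern_of_strictMono {k : ℕ} {ρ : Equiv.Perm (Fin k)} {g : Fin k → α}
    (hg : StrictMono g) (hfg : StrictMono (f ∘ g ∘ ρ.symm)) : MapContainsPattern f ρ :=
  ⟨g, hg, fun s t ↦ by simpa using (hfg.lt_iff_lt (a := ρ s) (b := ρ t)).symm⟩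

theorem mapContainsPattern_p321 {a b c : α} (hab : a < b) (hbc : b < c)
    (hcb : f c < f b) (hba : f b < f a) : MapContainsPattern f p321 := by
  apply mapContainsPattern_of_strictMono (g := ![a, b, c]) <;>
    simp [Fin.strictMono_iff_lt_succ, Fin.forall_fin_succ, p321, *]

theorem mapContainsPattern_p2143 {a b c d : α} (hab : a < b) (hbc : b < c) (hcd : c < d)
    (hba : f b < f a) (had : f a < f d) (hdc : f d < f c) : MapContainsPattern f p2143 := by
  apply mapContainsPattern_of_strictMono (g := ![a, b, c, d]) <;>
    simp [Fin.strictMono_iff_lt_succ, Fin.forall_fin_succ, p2143, *]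

theorem mapContainsPattern_p2413 {a b c d : α} (hab : a < b) (hbc : b < c) (hcd : c < d)
    (hca : f c < f a) (had : f a < f d) (hdb : f d < f b) : MapContainsPattern f p2413 := by
  apply mapContainsPattern_of_strictMono (g := ![a, b, c, d]) <;>
    simp [Fin.strictMono_iff_lt_succ, Fin.forall_fin_succ, p2413, *]

end Preorder

theorem IsInversion.mapContainsPattern_or_of_lt {α β : Type*} [LinearOrder α] [Preorder β]
    {f : α → β} {i j k l : α} (hij : IsInversion f i j) (hkl : IsInversion f k l)
    (hkj : f k < f j) :
    MapContainsPattern f p321 ∨ MapContainsPattern f p2143 ∨ MapContainsPattern f p2413 := by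
  obtain ⟨hij, hji⟩ := hij
  obtain ⟨hkl, hlk⟩ := hkl
  rcases lt_trichotomy i k with hik | rfl | hki
  · exact .inl (mapContainsPattern_p321 hik hkl hlk (hkj.trans hji))
  · exact absurd hkj hji.not_gt
  rcases lt_trichotomy j l with hjl | rfl | hlj
  · exact .inl (mapContainsPattern_p321 hij hjl (hlk.trans hkj) hji)
  · exact absurd hkj hlk.not_gt
  rcases lt_trichotomy l i with hli | rfl | hil
  · exact .inr (.inl (mapContainsPattern_p2143 hkl hli hij hlk hkj hji))
  · exact absurd (hkj.trans hji) hlk.not_gt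
  · exact .inr (.inr (mapContainsPattern_p2413 hki hil hlj hlk hkj hji))

section LinearOrderCodomain

variable {α β : Type*} [Preorder α] [LinearOrder β] {f : α → β}

theorem strictMonoOn_of_forall_not_isInversion (hf : Function.Injective f) {s : Set α}
    (hs : ∀ i ∈ s, ∀ j ∈ s, ¬ IsInversion f i j) : StrictMonoOn f s := by
  intro i hi j hj hij
  have hle : f i ≤ f j := not_lt.1 fun hji ↦ hs i hi j hj ⟨hij, hji⟩
  exact hle.lt_of_ne (hf.ne hij.ne)

theorem strictMonoOn_compl_aboveInversions (hf : Function.Injective f) :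
    StrictMonoOn f (aboveInversions f)ᶜ :=
  strictMonoOn_of_forall_not_isInversion hf fun i hi j _ hij ↦ hi ⟨i, j, hij, le_rfl⟩

theorem lt_of_mem_of_notMem_aboveInversions {i j : α} (hi : i ∈ aboveInversions f)
    (hj : j ∉ aboveInversions f) : f j < f i := by
  obtain ⟨k, l, hkl, hki⟩ := hi
  exact not_le.1 fun hij ↦ hj ⟨k, l, hkl, hki.trans hij⟩

end LinearOrderCodomain

section LinearOrder

variable {α β : Type*} [LinearOrder α] [LinearOrder β] {f : α → β}

theorem strictMonoOn_aboveInversions (hf : Function.Injective f)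
    (h321 : ¬ MapContainsPattern f p321) (h2143 : ¬ MapContainsPattern f p2143)
    (h2413 : ¬ MapContainsPattern f p2413) : StrictMonoOn f (aboveInversions f) := by
  apply strictMonoOn_of_forall_not_isInversion hf
  rintro i - j ⟨k, l, hkl, hkj⟩ hij
  rcases hkj.eq_or_lt with heq | hlt
  · obtain rfl : k = j := hf heq
    exact h321 (mapContainsPattern_p321 hij.1 hkl.1 hkl.2 hij.2)
  · rcases hij.mapContainsPattern_or_of_lt hkl hlt with h | h | h
    exacts [h321 h, h2143 h, h2413 h]

theorem avoid_321_2143_2413_layered_general (hf : Function.Injective f)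
    (h321 : ¬ MapContainsPattern f p321) (h2143 : ¬ MapContainsPattern f p2143)
    (h2413 : ¬ MapContainsPattern f p2413) :
    ∃ S : Set α, StrictMonoOn f S ∧ StrictMonoOn f Sᶜ ∧ ∀ i ∈ S, ∀ j ∉ S, f j < f i :=
  ⟨aboveInversions f, strictMonoOn_aboveInversions hf h321 h2143 h2413,
    strictMonoOn_compl_aboveInversions hf,
    fun _ hi _ hj ↦ lt_of_mem_of_notMem_aboveInversions hi hj⟩

end LinearOrder

/-- Every permutation avoiding `321`, `2143` and `2413` is the union of two increasing
subsequences, with every value of one exceeding every value of the other. -/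
theorem avoid_321_2143_2413_layered (n : ℕ) (π : Equiv.Perm (Fin n))
    (h321 : ¬ ContainsPattern π p321) (h2143 : ¬ ContainsPattern π p2143)
    (h2413 : ¬ ContainsPattern π p2413) :
    ∃ S : Set (Fin n),
      (∀ i ∈ S, ∀ j ∈ S, i < j → π i < π j) ∧
      (∀ i ∉ S, ∀ j ∉ S, i < j → π i < π j) ∧
      (∀ i ∈ S, ∀ j ∉ S, π j < π i) := by
  obtain ⟨S, hS, hSc, hlt⟩ := avoid_321_2143_2413_layered_general π.injective h321 h2143 h2413
  exact ⟨S, fun _ hi _ hj ↦ hS hi hj, fun _ hi _ hj ↦ hSc hi hj, hlt⟩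
end
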